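/- arXiv:1907.13438 — 11 statements merged into one kernel-verified Lean document; each statement's English description precedes it below -/
import Mathlib

section
/- Let A ∈ Mₙ(ℍ) be a nilpotent matrix (Aᵏ = 0 for some k). If the quaternionic numerical range W(A) is a closed disk, i.e. W(A) = 𝔻_ℍ(a, r) for some a ∈ ℍ and r ≥ 0, then its center is at the origin: W(A) = 𝔻_ℍ(0, r). -/
/-- The quaternionic numerical range of a square quaternionic matrix. -/
def qnr {ι : Type*} [Fintype ι] (A : Matrix ι ι (Quaternion ℝ)) : Set (Quaternion ℝ) :=
  {q | ∃ x : ι → Quaternion ℝ, (∑ i, ‖x i‖ ^ 2) = 1 ∧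
    q = ∑ i, ∑ j, star (x i) * A i j * x j}

open Quaternion in
/-- Right multiplication by complex numbers. -/
noncomputable def qcHom : ℂ →+* (Quaternion ℝ)ᵐᵒᵖ :=
  (Quaternion.ofComplex : ℂ →ₐ[ℝ] Quaternion ℝ).toRingHom.toOpposite (fun x y => by
    change (Quaternion.ofComplex x) * (Quaternion.ofComplex y) = (Quaternion.ofComplex y) * (Quaternion.ofComplex x)
    rw [← map_mul, ← map_mul, mul_comm])

/-- Quaternionic column vectors as a complex vector space. -/
noncomputable abbrev qcMod (n : ℕ) : Module ℂ (Fin n → Quaternion ℝ) :=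
  Module.compHom _ qcHom

lemma qnr_conj {n : ℕ} (A : Matrix (Fin n) (Fin n) (Quaternion ℝ)) (q u : Quaternion ℝ)
    (hu : ‖u‖ = 1) (hq : q ∈ qnr A) : star u * q * u ∈ qnr A := by
  obtain ⟨x, hx, rfl⟩ := hq
  refine ⟨fun i => x i * u, ?_, ?_⟩
  · simpa [norm_mul, hu] using hx
  · simp only [Finset.mul_sum, Finset.sum_mul, star_mul, mul_assoc]

lemma ball_center {a b : Quaternion ℝ} {r : ℝ} (hr : 0 ≤ r)
    (h : Metric.closedBall a r ⊆ Metric.closedBall b r) : a = b := by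
  by_contra hne
  have hd : 0 < ‖a - b‖ := norm_pos_iff.2 (sub_ne_zero.2 hne)
  have h1 : a + (r / ‖a - b‖) • (a - b) ∈ Metric.closedBall a r := by
    rw [mem_closedBall_iff_norm, add_sub_cancel_left, norm_smul, Real.norm_of_nonneg (by positivity)]
    rw [div_mul_cancel₀ _ hd.ne']
  have h2 := h h1
  rw [mem_closedBall_iff_norm] at h2
  have : a + (r / ‖a - b‖) • (a - b) - b = (1 + r / ‖a - b‖) • (a - b) := by
    rw [add_smul, one_smul]; abel
  rw [this, norm_smul, Real.norm_of_nonneg (by positivity), add_mul, div_mul_cancel₀ _ hd.ne'] at h2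
  linarith

lemma center_comm {n : ℕ} (A : Matrix (Fin n) (Fin n) (Quaternion ℝ))
    (a : Quaternion ℝ) (r : ℝ) (hr : 0 ≤ r)
    (h : qnr A = Metric.closedBall a r) (u : Quaternion ℝ) (hu : ‖u‖ = 1) : a * u = u * a := by
  have h1 : u * star u = 1 := by
    rw [Quaternion.self_mul_star, Quaternion.normSq_eq_norm_mul_self, hu]; simp
  have h2 : star u * u = 1 := by
    rw [Quaternion.star_mul_self, Quaternion.normSq_eq_norm_mul_self, hu]; simp
  have hus : ‖star u‖ = 1 := by rw [norm_star, hu]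
  have key : a = u * a * star u := by
    apply ball_center hr
    intro q hq
    rw [← h] at hq
    have := qnr_conj A q u hu hq
    rw [h, mem_closedBall_iff_norm] at this
    rw [mem_closedBall_iff_norm]
    have e : q - u * a * star u = u * (star u * q * u - a) * star u := by
      calc q - u * a * star u = (u * star u) * q * (u * star u) - u * a * star u := by simp [h1]
        _ = _ := by noncomm_ring
    rw [e, norm_mul, norm_mul, hu, hus]; simpa using this
  calc a * u = u * a * star u * u := by rw [← key]
    _ = u * a := by rw [mul_assoc, h2, mul_one]

lemma center_real {n : ℕ} (A : Matrix (Fin n) (Fin n) (Quaternion ℝ))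
    (a : Quaternion ℝ) (r : ℝ) (hr : 0 ≤ r)
    (h : qnr A = Metric.closedBall a r) : a = ((a.re : ℝ) : Quaternion ℝ) := by
  have hn : ∀ u : Quaternion ℝ, Quaternion.normSq u = 1 → ‖u‖ = 1 := by
    intro u hu
    rw [Quaternion.normSq_eq_norm_mul_self] at hu
    nlinarith [norm_nonneg u]
  obtain ⟨I, i0, i1, i2, i3⟩ : ∃ I : Quaternion ℝ, I.re = 0 ∧ I.imI = 1 ∧ I.imJ = 0 ∧ I.imK = 0 :=
    ⟨⟨0, 1, 0, 0⟩, rfl, rfl, rfl, rfl⟩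
  obtain ⟨J, j0, j1, j2, j3⟩ : ∃ I : Quaternion ℝ, I.re = 0 ∧ I.imI = 0 ∧ I.imJ = 1 ∧ I.imK = 0 :=
    ⟨⟨0, 0, 1, 0⟩, rfl, rfl, rfl, rfl⟩
  have hi := center_comm A a r hr h I (hn _ (by simp [Quaternion.normSq_def', i0, i1, i2, i3]))
  have hj := center_comm A a r hr h J (hn _ (by simp [Quaternion.normSq_def', j0, j1, j2, j3]))
  have h1 := congrArg QuaternionAlgebra.imK hi
  have h2 := congrArg QuaternionAlgebra.imJ hi
  have h3 := congrArg QuaternionAlgebra.imK hj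
  simp [i0, i1, i2, i3, j0, j1, j2, j3] at h1 h2 h3
  ext <;> simp <;> linarith

/-- Real inner product. -/
noncomputable def qip {n : ℕ} (x y : Fin n → Quaternion ℝ) : ℝ := (star x ⬝ᵥ y).re

section
variable {n : ℕ}

lemma re_comm (p q : Quaternion ℝ) : (p * q).re = (q * p).re := by
  simp; ring

lemma qip_add_right (x y z : Fin n → Quaternion ℝ) : qip x (y + z) = qip x y + qip x z := by
  simp [qip, dotProduct_add]
lemma qip_sub_right (x y z : Fin n → Quaternion ℝ) : qip x (y - z) = qip x y - qip x z := by
  simp [qip, dotProduct_sub]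
lemma qip_smul_right (c : ℝ) (x y : Fin n → Quaternion ℝ) : qip x (c • y) = c * qip x y := by
  simp [qip, dotProduct_smul]
lemma qip_comm (x y : Fin n → Quaternion ℝ) : qip x y = qip y x := by
  have : star y ⬝ᵥ x = star (star x ⬝ᵥ y) := by
    simp [dotProduct, star_sum]
  unfold qip
  rw [this, Quaternion.re_star]
lemma qip_self (x : Fin n → Quaternion ℝ) : qip x x = ∑ i, ‖x i‖ ^ 2 := by
  unfold qip dotProduct
  have : ∑ i, star x i * x i = ((∑ i, ‖x i‖ ^ 2 : ℝ) : Quaternion ℝ) := by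
    rw [← Quaternion.algebraMap_def, map_sum]
    refine Finset.sum_congr rfl fun i _ => ?_
    rw [Pi.star_apply, Quaternion.star_mul_self, Quaternion.normSq_eq_norm_mul_self, sq]
    rfl
  rw [this, Quaternion.re_coe]
lemma qip_self_eq_zero (x : Fin n → Quaternion ℝ) (h : qip x x = 0) : x = 0 := by
  rw [qip_self, Finset.sum_eq_zero_iff_of_nonneg (fun _ _ => by positivity)] at h
  ext1 i
  simpa using h i (Finset.mem_univ i)
lemma qip_op (u : Quaternion ℝ) (x y : Fin n → Quaternion ℝ) :
    qip x (MulOpposite.op u • y) = qip (MulOpposite.op (star u) • x) y := by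
  have h1 : star x ⬝ᵥ (MulOpposite.op u • y) = (star x ⬝ᵥ y) * u := by
    simp [dotProduct, Finset.sum_mul, mul_assoc]
  have h2 : star (MulOpposite.op (star u) • x) ⬝ᵥ y = u * (star x ⬝ᵥ y) := by
    simp [dotProduct, Finset.mul_sum, mul_assoc]
  unfold qip
  rw [h1, h2, re_comm]
lemma qip_mulVec (B : Matrix (Fin n) (Fin n) (Quaternion ℝ)) (x y : Fin n → Quaternion ℝ) :
    qip x (B.mulVec y) = qip (B.conjTranspose.mulVec x) y := by
  unfold qip
  rw [Matrix.star_mulVec, Matrix.conjTranspose_conjTranspose, Matrix.dotProduct_mulVec]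

lemma mulVec_op (B : Matrix (Fin n) (Fin n) (Quaternion ℝ)) (u : Quaternion ℝ)
    (x : Fin n → Quaternion ℝ) :
    B.mulVec (MulOpposite.op u • x) = MulOpposite.op u • B.mulVec x := by
  rw [Matrix.mulVec_smul]

/-- A vanishing vector of a positive semidefinite form is in the kernel. -/
lemma psd_kernel (M : (Fin n → Quaternion ℝ) →ₗ[ℝ] (Fin n → Quaternion ℝ))
    (hs : ∀ x y, qip x (M y) = qip (M x) y) (hp : ∀ x, 0 ≤ qip x (M x))
    (x : Fin n → Quaternion ℝ) (hx : qip x (M x) = 0) : M x = 0 := by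
  apply qip_self_eq_zero
  set y := M x with hy
  have hq : ∀ t : ℝ, 0 ≤ 2 * t * qip y y + t ^ 2 * qip y (M y) := by
    intro t
    have h1 := hp (x + t • y)
    rw [map_add, map_smul, qip_add_right, qip_smul_right, qip_comm _ (M x), qip_comm _ (M y),
      qip_add_right, qip_add_right, qip_smul_right, qip_smul_right, qip_comm (M x) x, hx,
      qip_comm (M y) x, hs x y, qip_comm (M y) y, ← hy] at h1
    linarith
  have h0 : 0 ≤ qip y y := by rw [qip_self]; positivity
  by_contra hne
  have hpos : 0 < qip y y := lt_of_le_of_ne h0 (Ne.symm hne)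
  have hc := hp y
  set c := qip y (M y)
  set b := qip y y
  have := hq (-(b / (c + 1)))
  have hc1 : 0 < c + 1 := by linarith
  have e : 2 * (-(b / (c + 1))) * b + (-(b / (c + 1))) ^ 2 * c = - (b ^ 2 * (c + 2)) / (c + 1) ^ 2 := by
    field_simp; ring
  rw [e] at this
  have : 0 < (b ^ 2 * (c + 2)) / (c + 1) ^ 2 := by positivity
  rw [neg_div] at *
  linarith

lemma qnr_eq (A : Matrix (Fin n) (Fin n) (Quaternion ℝ)) (x : Fin n → Quaternion ℝ) :
    ∑ i, ∑ j, star (x i) * A i j * x j = star x ⬝ᵥ A.mulVec x := by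
  simp [dotProduct, Matrix.mulVec, Finset.mul_sum, mul_assoc]

lemma qip_smul_left (c : ℝ) (x y : Fin n → Quaternion ℝ) : qip (c • x) y = c * qip x y := by
  rw [qip_comm, qip_smul_right, qip_comm]

/-- The hermitian pencil. -/
noncomputable def pencil (B : Matrix (Fin n) (Fin n) (Quaternion ℝ)) (r : ℝ) (u : Quaternion ℝ) :
    (Fin n → Quaternion ℝ) →ₗ[ℝ] (Fin n → Quaternion ℝ) where
  toFun x := (2 * r) • x - MulOpposite.op (star u) • B.mulVec x
    - MulOpposite.op u • B.conjTranspose.mulVec x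
  map_add' x y := by simp only [smul_add, Matrix.mulVec_add]; abel
  map_smul' c x := by
    simp only [Matrix.mulVec_smul, RingHom.id_apply, smul_sub]
    rw [smul_comm (2 * r) c, smul_comm _ c, smul_comm _ c]

lemma pencil_symm (B : Matrix (Fin n) (Fin n) (Quaternion ℝ)) (r : ℝ) (u : Quaternion ℝ)
    (x y : Fin n → Quaternion ℝ) : qip x (pencil B r u y) = qip (pencil B r u x) y := by
  rw [qip_comm (pencil B r u x)]
  simp only [pencil, LinearMap.coe_mk, AddHom.coe_mk, qip_sub_right, qip_smul_right]
  rw [qip_op, qip_mulVec, mulVec_op, star_star, qip_op u x, qip_mulVec, mulVec_op,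
    Matrix.conjTranspose_conjTranspose, qip_comm x y, qip_comm _ y, qip_comm _ y]
  ring

lemma pencil_self (B : Matrix (Fin n) (Fin n) (Quaternion ℝ)) (r : ℝ) (u : Quaternion ℝ)
    (x : Fin n → Quaternion ℝ) :
    qip x (pencil B r u x) = 2 * (r * qip x x - ((star x ⬝ᵥ B.mulVec x) * star u).re) := by
  have h1 : qip x (MulOpposite.op (star u) • B.mulVec x) = ((star x ⬝ᵥ B.mulVec x) * star u).re := by
    simp only [qip]
    congr 1
    simp [dotProduct, Finset.sum_mul, mul_assoc]
    rfl
  have h2 : qip x (MulOpposite.op u • B.conjTranspose.mulVec x) =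
      qip x (MulOpposite.op (star u) • B.mulVec x) := by
    rw [qip_op, qip_mulVec, mulVec_op, Matrix.conjTranspose_conjTranspose, qip_comm]
  simp only [pencil, LinearMap.coe_mk, AddHom.coe_mk, qip_sub_right, qip_smul_right]
  rw [h2, h1]; ring

lemma exists_kernel (A : Matrix (Fin n) (Fin n) (Quaternion ℝ)) (a r : ℝ) (hr : 0 ≤ r)
    (h : qnr A = Metric.closedBall (a : Quaternion ℝ) r) (u : Quaternion ℝ) (hu : ‖u‖ = 1) :
    ∃ x : Fin n → Quaternion ℝ, x ≠ 0 ∧ pencil (A - a • 1) r u x = 0 := by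
  have hus : u * star u = 1 := by
    rw [Quaternion.self_mul_star, Quaternion.normSq_eq_norm_mul_self, hu]; simp
  have hsh : ∀ x : Fin n → Quaternion ℝ, star x ⬝ᵥ (A - a • 1).mulVec x
      = star x ⬝ᵥ A.mulVec x - a • (star x ⬝ᵥ x) := by
    intro x
    rw [Matrix.sub_mulVec, Matrix.smul_mulVec, Matrix.one_mulVec, dotProduct_sub, dotProduct_smul]
  have hself : ∀ x : Fin n → Quaternion ℝ, qip x x = 1 → star x ⬝ᵥ x = 1 := by
    intro x hx
    have : ∑ i, star x i * x i = ((∑ i, ‖x i‖ ^ 2 : ℝ) : Quaternion ℝ) := by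
      rw [← Quaternion.algebraMap_def, map_sum]
      refine Finset.sum_congr rfl fun i _ => ?_
      rw [Pi.star_apply, Quaternion.star_mul_self, Quaternion.normSq_eq_norm_mul_self, sq]
      rfl
    rw [← qip_self, hx] at this
    simpa [dotProduct] using this
  have hunit : ∀ x : Fin n → Quaternion ℝ, qip x x = 1 → 0 ≤ qip x (pencil (A - a • 1) r u x) := by
    intro x hx
    have hm : star x ⬝ᵥ A.mulVec x ∈ qnr A := ⟨x, by rw [← qip_self, hx], (qnr_eq A x).symm⟩
    rw [h, mem_closedBall_iff_norm] at hm
    rw [pencil_self, hx, hsh, hself x hx]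
    have e : (a • (1 : Quaternion ℝ)) = (a : Quaternion ℝ) := by
      rw [← Quaternion.coe_one, Quaternion.smul_coe, mul_one]
    rw [e]
    set q := star x ⬝ᵥ A.mulVec x - (a : Quaternion ℝ)
    have h3 : (q * star u).re ≤ ‖q‖ * ‖u‖ := by
      have := real_inner_le_norm q u
      rwa [Quaternion.inner_def] at this
    rw [hu] at h3
    linarith
  have hp : ∀ x, 0 ≤ qip x (pencil (A - a • 1) r u x) := by
    intro x
    have h0 : 0 ≤ qip x x := by rw [qip_self]; positivity
    rcases h0.eq_or_lt with h0 | h0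
    · rw [qip_self_eq_zero x h0.symm, map_zero, qip_self]; positivity
    · set s := Real.sqrt (qip x x)
      have hs : 0 < s := Real.sqrt_pos.2 h0
      have hss : s * s = qip x x := Real.mul_self_sqrt h0.le
      have := hunit (s⁻¹ • x) (by
        rw [qip_smul_left, qip_smul_right, ← hss]; field_simp)
      rw [map_smul, qip_smul_left, qip_smul_right, ← mul_assoc] at this
      exact nonneg_of_mul_nonneg_right this (by positivity)
  have hmem : (a : Quaternion ℝ) + r • u ∈ qnr A := by
    rw [h, mem_closedBall_iff_norm, add_sub_cancel_left, norm_smul, hu, mul_one,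
      Real.norm_of_nonneg hr]
  obtain ⟨x, hx, hxq⟩ := hmem
  rw [qnr_eq] at hxq
  rw [← qip_self] at hx
  refine ⟨x, ?_, psd_kernel _ (pencil_symm _ _ _) hp x ?_⟩
  · rintro rfl
    rw [qip_self] at hx
    simp at hx
  · have e : (a • (1 : Quaternion ℝ)) = (a : Quaternion ℝ) := by
      rw [← Quaternion.coe_one, Quaternion.smul_coe, mul_one]
    rw [pencil_self, hx, hsh, hself x hx, e, ← hxq, add_sub_cancel_left, smul_mul_assoc, hus,
      Quaternion.re_smul, Quaternion.re_one]
    simp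

attribute [local instance] qcMod

lemma qc_smul_def (z : ℂ) (x : Fin n → Quaternion ℝ) :
    z • x = MulOpposite.op (Quaternion.ofComplex z) • x := rfl

lemma qc_finite : Module.Finite ℂ (Fin n → Quaternion ℝ) := by
  have : IsScalarTower ℝ ℂ (Fin n → Quaternion ℝ) := by
    refine ⟨fun c z x => ?_⟩
    rw [qc_smul_def, qc_smul_def, map_smul, MulOpposite.op_smul, smul_assoc]
  exact Module.Finite.of_restrictScalars_finite ℝ ℂ _

/-- The complex linear map of a matrix. -/
noncomputable def qcLin (B : Matrix (Fin n) (Fin n) (Quaternion ℝ)) :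
    (Fin n → Quaternion ℝ) →ₗ[ℂ] (Fin n → Quaternion ℝ) where
  toFun := B.mulVec
  map_add' x y := Matrix.mulVec_add _ _ _
  map_smul' c x := by rw [qc_smul_def, mulVec_op]; rfl

lemma circle_infinite : {z : ℂ | ‖z‖ = 1}.Infinite := by
  intro hf
  have h1 : (Complex.re '' {z : ℂ | ‖z‖ = 1}).Finite := hf.image _
  refine (Set.Icc_infinite (show (-1 : ℝ) < 1 by norm_num)) (h1.subset ?_)
  intro c hc
  refine ⟨Complex.exp (Real.arccos c * Complex.I), Complex.norm_exp_ofReal_mul_I _, ?_⟩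
  rw [Complex.exp_ofReal_mul_I_re, Real.cos_arccos hc.1 hc.2]

lemma no_unit (B D : Matrix (Fin n) (Fin n) (Quaternion ℝ)) (hD : D * B = 1) (r : ℝ)
    (hk : ∀ u : Quaternion ℝ, ‖u‖ = 1 → ∃ x : Fin n → Quaternion ℝ, x ≠ 0 ∧ pencil B r u x = 0) :
    False := by
  have := qc_finite (n := n)
  let C : Module.End ℂ ((Fin n → Quaternion ℝ) × (Fin n → Quaternion ℝ)) :=
    LinearMap.prod
      (((2 * r : ℝ) : ℂ) • (qcLin D ∘ₗ LinearMap.fst ℂ _ _)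
        - qcLin (D * B.conjTranspose) ∘ₗ LinearMap.snd ℂ _ _)
      (LinearMap.fst ℂ _ _)
  refine circle_infinite ((Module.End.finite_hasEigenvalue C).subset ?_)
  intro w hw
  have hw : ‖w‖ = 1 := hw
  have hwu : ‖Quaternion.ofComplex (star w)‖ = 1 := by
    have h1 : ‖((star w : ℂ) : Quaternion ℝ)‖ * ‖((star w : ℂ) : Quaternion ℝ)‖ = ‖w‖ * ‖w‖ := by
      rw [← Quaternion.normSq_eq_norm_mul_self, Quaternion.normSq_def', ← sq, ← Complex.normSq_eq_norm_sq,
        Complex.normSq_apply]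
      simp
      ring
    rw [hw] at h1
    change ‖((star w : ℂ) : Quaternion ℝ)‖ = 1
    nlinarith [norm_nonneg ((star w : ℂ) : Quaternion ℝ)]
  obtain ⟨x, hx, hxk⟩ := hk _ hwu
  have hst : star (Quaternion.ofComplex (star w)) = Quaternion.ofComplex w := by
    change star ((star w : ℂ) : Quaternion ℝ) = (w : Quaternion ℝ)
    ext <;> simp
  have hww : w * star w = 1 := by
    have := Complex.mul_conj w
    rw [Complex.normSq_eq_norm_sq, hw] at this
    simpa using this
  have h2r : ∀ y : Fin n → Quaternion ℝ, ((2 * r : ℝ) : ℂ) • y = (2 * r) • y := by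
    intro y
    rw [qc_smul_def]
    ext1 i
    change y i * ((((2 * r : ℝ) : ℂ)) : Quaternion ℝ) = _
    rw [Quaternion.coeComplex_coe, ← Quaternion.coe_commutes, Quaternion.coe_mul_eq_smul]
    rfl
  have hk1 : ((2 * r : ℝ) : ℂ) • x - w • qcLin B x - (star w) • qcLin B.conjTranspose x = 0 := by
    rw [h2r]
    simp only [pencil, LinearMap.coe_mk, AddHom.coe_mk, hst] at hxk
    exact hxk
  have hDB : qcLin D (qcLin B x) = x := by
    change D.mulVec (B.mulVec x) = x
    rw [Matrix.mulVec_mulVec, hD, Matrix.one_mulVec]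
  have hDBH : qcLin D (qcLin B.conjTranspose x) = qcLin (D * B.conjTranspose) x := by
    change D.mulVec (B.conjTranspose.mulVec x) = (D * B.conjTranspose).mulVec x
    rw [Matrix.mulVec_mulVec]
  have hk2 := congrArg (qcLin D) hk1
  rw [map_sub, map_sub, map_smul, map_smul, map_smul, hDB, hDBH, map_zero] at hk2
  have hk3 := congrArg (fun y => w • y) hk2
  simp only [smul_sub, smul_zero] at hk3
  rw [← mul_smul w (star w), hww, one_smul] at hk3
  apply Module.End.hasEigenvalue_of_hasEigenvector (x := (w • x, x))
  rw [Module.End.hasEigenvector_iff, Module.End.mem_eigenspace_iff]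
  refine ⟨?_, fun h0 => hx (congrArg Prod.snd h0)⟩
  refine Prod.ext ?_ rfl
  change ((2 * r : ℝ) : ℂ) • qcLin D (w • x) - qcLin (D * B.conjTranspose) x = w • w • x
  rw [map_smul, smul_comm]
  rw [sub_right_comm] at hk3
  exact sub_eq_zero.1 hk3

end

/-- If `A` is a nilpotent quaternionic matrix and its numerical range is a
closed disk `𝔻_ℍ(a, r)`, then in fact `W(A) = 𝔻_ℍ(0, r)`. -/
theorem nilpotent_disk_center_zero {n : ℕ} (A : Matrix (Fin n) (Fin n) (Quaternion ℝ))
    (hA : IsNilpotent A) (a : Quaternion ℝ) (r : ℝ) (hr : 0 ≤ r)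
    (h : qnr A = Metric.closedBall a r) :
    qnr A = Metric.closedBall (0 : Quaternion ℝ) r := by
  have ha := center_real A a r hr h
  suffices h0 : a.re = 0 by
    rw [h0] at ha
    rw [h, ha]; simp
  by_contra hne
  rw [ha] at h
  have hU : IsUnit (a.re • (1 : Matrix (Fin n) (Fin n) (Quaternion ℝ))) :=
    isUnit_one.smul (Units.mk0 a.re hne)
  have hU2 : IsUnit (A - a.re • (1 : Matrix (Fin n) (Fin n) (Quaternion ℝ))) := by
    rw [sub_eq_add_neg]
    refine hA.isUnit_add_right_of_commute hU.neg ?_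
    exact ((Commute.one_right A).smul_right _).neg_right
  obtain ⟨D, hD⟩ := hU2.exists_left_inv
  exact no_unit _ D hD r (fun u hu => exists_kernel A a.re r hr h u hu)
end

section
/- Let A = [a_{ij}] ∈ Mₙ(ℍ) be strictly upper triangular (a_{ij} = 0 for i ≥ j) and a tree matrix, and let β = (β₁,…,βₙ) ∈ S⁺_{ℝⁿ}. Then the union over all z₁,…,zₙ of unit quaternions of the singletons {∑_{i,j=1}^n βᵢβⱼ zᵢ* a_{ij} zⱼ} equals the Minkowski sum of spheres ∑_{i,j=1}^n 𝕊_ℍ(0, βᵢβⱼ|a_{ij}|), i.e. it equals {∑_{i,j=1}^n s_{ij} : s_{ij} ∈ ℍ, |s_{ij}| = βᵢβⱼ|a_{ij}| for all i,j}. -/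
/-- The undirected graph associated with a quaternionic matrix `A`: distinct vertices `i, j`
are adjacent iff `A i j ≠ 0` or `A j i ≠ 0`. -/
def graphOf {n : ℕ} (A : Matrix (Fin n) (Fin n) (Quaternion ℝ)) : SimpleGraph (Fin n) :=
  SimpleGraph.fromRel (fun i j => A i j ≠ 0)

/-- Labelling a tree by propagating along edges from a root. -/
theorem tree_label {V X : Type*} (G : SimpleGraph V) (hG : G.IsTree) (x0 : X)
    (R : V → V → X → X → Prop) (hsymm : ∀ u v x y, R u v x y → R v u y x)
    (hstep : ∀ u v, G.Adj u v → ∀ y, ∃ x, R u v x y) :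
    ∃ z : V → X, ∀ u v, G.Adj u v → R u v (z u) (z v) := by
  classical
  obtain ⟨r⟩ := hG.1.nonempty
  choose g hg using hstep
  let f : ∀ {u w : V}, G.Walk u w → X := fun {u w} p =>
    SimpleGraph.Walk.rec (motive := fun _ _ _ => X) (fun {_} => x0)
      (fun {u v _} h _ ih => g u v h ih) p
  have hf : ∀ {u v w : V} (h : G.Adj u v) (p : G.Walk v w),
      f (SimpleGraph.Walk.cons h p) = g u v h (f p) := fun h p => rfl
  have hp : ∀ v, ∃ p : G.Walk v r, p.IsPath := fun v => by
    obtain ⟨p⟩ := hG.1.preconnected v r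
    exact ⟨p.bypass, p.bypass_isPath⟩
  choose P hP using hp
  have huniq : ∀ {u v : V} (p q : G.Walk u v), p.IsPath → q.IsPath → p = q := by
    intro u v p q h1 h2
    exact congrArg Subtype.val (hG.2.path_unique ⟨p, h1⟩ ⟨q, h2⟩)
  refine ⟨fun v => f (P v), fun u v h => ?_⟩
  by_cases hu : u ∈ (P v).support
  · have h1 : (P v).takeUntil u hu = SimpleGraph.Walk.cons h.symm SimpleGraph.Walk.nil := by
      apply huniq _ _ ((hP v).takeUntil hu)
      simp [h.ne']
    have h2 : (P v).dropUntil u hu = P u := huniq _ _ ((hP v).dropUntil hu) (hP u)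
    have h3 : P v = SimpleGraph.Walk.cons h.symm (P u) := by
      rw [← (P v).take_spec hu, h1, h2]
      rfl
    apply hsymm
    show R v u (f (P v)) (f (P u))
    rw [h3, hf]
    exact hg _ _ _ _
  · have h3 : P u = SimpleGraph.Walk.cons h (P v) :=
      huniq _ _ (hP u) ((hP v).cons hu)
    show R u v (f (P u)) (f (P v))
    rw [h3, hf]
    exact hg _ _ _ _

theorem quat_right (c : ℝ) (hc : 0 ≤ c) (a s x : Quaternion ℝ) (ha : a ≠ 0) (hx : ‖x‖ = 1)
    (hs : ‖s‖ = c * ‖a‖) :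
    ∃ y : Quaternion ℝ, ‖y‖ = 1 ∧ c • (star x * a * y) = s := by
  rcases hc.eq_or_lt with rfl | hc
  · refine ⟨1, by simp, ?_⟩
    have : s = 0 := by simpa using hs
    simp [this]
  · have hx0 : star x ≠ 0 := by
      intro h
      rw [star_eq_zero] at h
      simp [h] at hx
    have hb : star x * a ≠ 0 := mul_ne_zero hx0 ha
    have ha' : ‖a‖ ≠ 0 := by simpa using ha
    refine ⟨(star x * a)⁻¹ * (c⁻¹ • s), ?_, ?_⟩
    · rw [norm_mul, norm_inv, norm_mul, norm_star, hx, norm_smul, hs, norm_inv,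
        Real.norm_of_nonneg hc.le]
      field_simp
    · rw [mul_inv_cancel_left₀ hb, smul_inv_smul₀ hc.ne']

theorem quat_left (c : ℝ) (hc : 0 ≤ c) (a s y : Quaternion ℝ) (ha : a ≠ 0) (hy : ‖y‖ = 1)
    (hs : ‖s‖ = c * ‖a‖) :
    ∃ x : Quaternion ℝ, ‖x‖ = 1 ∧ c • (star x * a * y) = s := by
  obtain ⟨x, hx, h⟩ := quat_right c hc (star a) (star s) y (by simpa using ha) hy
    (by simpa using hs)
  refine ⟨x, hx, ?_⟩
  apply star_injective
  rw [← h]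
  simp [mul_assoc]

/-- For a strictly upper triangular tree matrix `A` and `β ∈ S⁺_{ℝⁿ}`, the union
over unit quaternions `z₁, …, zₙ` of the singletons `{∑ᵢⱼ βᵢβⱼ zᵢ* aᵢⱼ zⱼ}` equals the
Minkowski sum of the spheres `𝕊_ℍ(0, βᵢβⱼ|aᵢⱼ|)`. -/
theorem tree_matrix_sphere_sum {n : ℕ} (A : Matrix (Fin n) (Fin n) (Quaternion ℝ))
    (hupper : ∀ i j, j ≤ i → A i j = 0)
    (htree : (graphOf A).IsTree)
    (β : Fin n → ℝ) (hβ0 : ∀ i, 0 ≤ β i) (hβ1 : (∑ i, β i ^ 2) = 1) :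
    {q : Quaternion ℝ | ∃ z : Fin n → Quaternion ℝ, (∀ k, ‖z k‖ = 1) ∧
        q = ∑ i, ∑ j, (β i * β j) • (star (z i) * A i j * z j)} =
    {q : Quaternion ℝ | ∃ s : Fin n → Fin n → Quaternion ℝ,
        (∀ i j, ‖s i j‖ = β i * β j * ‖A i j‖) ∧ q = ∑ i, ∑ j, s i j} := by
  ext q
  simp only [Set.mem_setOf_eq]
  constructor
  · rintro ⟨z, hz, rfl⟩
    refine ⟨fun i j => (β i * β j) • (star (z i) * A i j * z j), fun i j => ?_, rfl⟩
    rw [norm_smul, Real.norm_of_nonneg (mul_nonneg (hβ0 i) (hβ0 j)), norm_mul, norm_mul, norm_star, hz, hz]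
    ring
  · rintro ⟨s, hs, rfl⟩
    have hs0 : ∀ i j, A i j = 0 → s i j = 0 := fun i j h => by
      have := hs i j
      rw [h] at this
      simpa using this
    obtain ⟨z, hz⟩ := tree_label (graphOf A) htree
      (⟨1, by simp⟩ : {x : Quaternion ℝ // ‖x‖ = 1})
      (fun i j x y => (β i * β j) • (star x.1 * A i j * y.1) = s i j ∧
        (β j * β i) • (star y.1 * A j i * x.1) = s j i)
      (fun u v x y h => ⟨h.2, h.1⟩)
      (by
        rintro i j hij ⟨y, hy⟩
        simp only [graphOf, SimpleGraph.fromRel_adj] at hij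
        rcases hij.2 with h | h
        · have h0 : A j i = 0 := by
            refine hupper j i (le_of_not_ge fun hle => h (hupper i j hle))
          obtain ⟨x, hx, e⟩ := quat_left _ (mul_nonneg (hβ0 i) (hβ0 j)) _ _ y h hy (hs i j)
          exact ⟨⟨x, hx⟩, e, by simp [h0, hs0 j i h0]⟩
        · have h0 : A i j = 0 := by
            refine hupper i j (le_of_not_ge fun hle => h (hupper j i hle))
          obtain ⟨x, hx, e⟩ := quat_right _ (mul_nonneg (hβ0 j) (hβ0 i)) _ _ y h hy (hs j i)
          exact ⟨⟨x, hx⟩, by simp [h0, hs0 i j h0], e⟩)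
    refine ⟨fun i => (z i).1, fun i => (z i).2, ?_⟩
    refine Finset.sum_congr rfl fun i _ => Finset.sum_congr rfl fun j _ => ?_
    by_cases h : A i j = 0
    · simp [h, hs0 i j h]
    · have hne : i ≠ j := by
        rintro rfl
        exact h (hupper i i le_rfl)
      exact ((hz i j (by simp [graphOf, SimpleGraph.fromRel_adj, hne, h])).1).symm
end

section
/- Let A = [a_{ij}] ∈ Mₙ(ℍ) be strictly upper triangular (a_{ij} = 0 for i ≥ j) and a tree matrix. Then W(A) is a circular disk with center at the origin whose radius is the maximum of β ↦ ∑_{i,j=1}^n βᵢβⱼ|a_{ij}| over β ∈ S⁺_{ℝⁿ}; that is, W(A) = 𝔻_ℍ(0, max_{β ∈ S⁺_{ℝⁿ}} ∑_{i,j} βᵢβⱼ|a_{ij}|). -/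
/-- Transport a value along a walk. -/
def walkFold {V α : Type*} {G : SimpleGraph V} (φ : V → V → α → α) :
    ∀ {u v : V}, G.Walk u v → α → α
  | _, _, .nil, x => x
  | _, _, .cons (u := a) (v := b) _ p, x => walkFold φ p (φ a b x)

theorem walkFold_append {V α : Type*} {G : SimpleGraph V} (φ : V → V → α → α)
    {u v w : V} (p : G.Walk u v) (q : G.Walk v w) (x : α) :
    walkFold φ (p.append q) x = walkFold φ q (walkFold φ p x) := by
  induction p generalizing x with
  | nil => rfl
  | cons h p ih => simp only [SimpleGraph.Walk.cons_append, walkFold]; exact ih _ _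

theorem walkFold_inv {V α : Type*} {G : SimpleGraph V} (φ : V → V → α → α) (P : α → Prop)
    (hP : ∀ i j x, G.Adj i j → P x → P (φ i j x))
    {u v : V} (p : G.Walk u v) (x : α) (hx : P x) : P (walkFold φ p x) := by
  induction p generalizing x with
  | nil => exact hx
  | cons h p ih => simp only [walkFold]; exact ih _ (hP _ _ _ h hx)

theorem tree_labels {V α : Type*} {G : SimpleGraph V} (hG : G.IsTree)
    (φ : V → V → α → α) (P : α → Prop)
    (hP : ∀ i j x, G.Adj i j → P x → P (φ i j x))
    (hinv : ∀ i j x, G.Adj i j → φ j i (φ i j x) = x) (x₀ : α) (hx₀ : P x₀) :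
    ∃ s : V → α, (∀ i, P (s i)) ∧ ∀ i j, G.Adj i j → s j = φ i j (s i) := by
  classical
  obtain ⟨r⟩ := hG.1.nonempty
  choose p hp hu using fun v => hG.existsUnique_path r v
  refine ⟨fun v => walkFold φ (p v) x₀, fun i => walkFold_inv φ P hP _ _ hx₀, ?_⟩
  have key : ∀ i j, G.Adj i j → ∀ (q : G.Walk r j) (q' : G.Walk r i) (h : G.Adj i j),
      q = q'.append (.cons h .nil) →
      walkFold φ q x₀ = φ i j (walkFold φ q' x₀) := by
    rintro i j - q q' h rfl
    rw [walkFold_append]; rfl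
  intro i j h
  by_cases hi : i ∈ (p j).support
  · refine key i j h _ _ h ?_
    have h1 : (p j).takeUntil i hi = p i := hu i _ ((hp j).takeUntil hi)
    have h2 : (p j).dropUntil i hi = .cons h .nil := by
      have hpath : (SimpleGraph.Walk.cons h .nil : G.Walk i j).IsPath := by
        simp [h.ne]
      exact (hG.existsUnique_path i j).unique ((hp j).dropUntil hi) hpath
    rw [← h1, ← h2, SimpleGraph.Walk.take_spec]
  · have h1 : (p j).concat h.symm = p i := hu i _ ((hp j).concat hi h.symm)
    have := key j i h.symm (p i) (p j) h.symm (by rw [← h1, SimpleGraph.Walk.concat_eq_append])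
    show walkFold φ (p j) x₀ = φ i j (walkFold φ (p i) x₀)
    rw [this, hinv _ _ _ h.symm]

theorem unit_mul_star (a : Quaternion ℝ) (h : ‖a‖ = 1) : a * star a = 1 := by
  rw [Quaternion.self_mul_star, Quaternion.normSq_eq_norm_mul_self, h]; simp

theorem unit_star_mul (a : Quaternion ℝ) (h : ‖a‖ = 1) : star a * a = 1 := by
  rw [Quaternion.star_mul_self, Quaternion.normSq_eq_norm_mul_self, h]; simp

theorem exists_phases {n : ℕ} (A : Matrix (Fin n) (Fin n) (Quaternion ℝ))
    (hupper : ∀ i j, j ≤ i → A i j = 0)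
    (htree : (graphOf A).IsTree) (u : Quaternion ℝ) (hu : ‖u‖ = 1) :
    ∃ s : Fin n → Quaternion ℝ, (∀ i, ‖s i‖ = 1) ∧
      ∀ i j, star (s i) * A i j * s j = ‖A i j‖ • u := by
  classical
  set b : Fin n → Fin n → Quaternion ℝ := fun i j => ‖A i j‖⁻¹ • A i j with hb
  have hbn : ∀ i j, A i j ≠ 0 → ‖b i j‖ = 1 := fun i j h => by
    have := norm_ne_zero_iff.2 h
    simp [hb, norm_smul, this]
  have hba : ∀ i j, A i j = ‖A i j‖ • b i j := fun i j => by
    by_cases h : A i j = 0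
    · simp [h]
    · simp [hb, smul_smul, norm_ne_zero_iff.2 h]
  have hadj : ∀ i j, (graphOf A).Adj i j →
      (A i j ≠ 0 ∧ A j i = 0) ∨ (A i j = 0 ∧ A j i ≠ 0) := by
    intro i j h
    rw [graphOf, SimpleGraph.fromRel_adj] at h
    rcases le_total i j with h1 | h1
    · have := hupper j i h1; left; tauto
    · have := hupper i j h1; right; tauto
  obtain ⟨s, hs, hs'⟩ := tree_labels htree
    (fun i j x => if A i j = 0 then b j i * x * star u else star (b i j) * x * u)
    (fun x => ‖x‖ = 1) (by
      intro i j x h hx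
      rcases hadj i j h with ⟨h1, h2⟩ | ⟨h1, h2⟩
      · simp [h1, hx, hu, hbn i j h1]
      · simp [h1, hx, hu, hbn j i h2]) (by
      intro i j x h
      rcases hadj i j h with ⟨h1, h2⟩ | ⟨h1, h2⟩
      · simp only [h1, h2, if_true, if_false]
        calc _ = (b i j * star (b i j)) * x * (u * star u) := by simp only [mul_assoc]
          _ = x := by rw [unit_mul_star _ hu, unit_mul_star _ (hbn i j h1)]; simp
      · simp only [h1, h2, if_true, if_false]
        calc _ = (star (b j i) * b j i) * x * (star u * u) := by simp only [mul_assoc]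
          _ = x := by rw [unit_star_mul _ hu, unit_star_mul _ (hbn j i h2)]; simp)
    1 (by simp)
  refine ⟨s, hs, fun i j => ?_⟩
  by_cases h : A i j = 0
  · simp [h]
  have hne : i ≠ j := by rintro rfl; exact h (hupper i i le_rfl)
  have := hs' i j (by rw [graphOf, SimpleGraph.fromRel_adj]; exact ⟨hne, Or.inl h⟩)
  simp only [h, if_false] at this
  rw [this]
  calc _ = star (s i) * (‖A i j‖ • b i j) * (star (b i j) * s i * u) := by rw [← hba]
    _ = ‖A i j‖ • (star (s i) * (b i j * star (b i j)) * s i * u) := by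
      simp only [mul_assoc, smul_mul_assoc, mul_smul_comm]
    _ = _ := by rw [unit_mul_star _ (hbn i j h), mul_one, unit_star_mul _ (hs i), one_mul]

theorem exists_beta {n : ℕ} (c : Fin n → Fin n → ℝ) (hc : ∀ i, c i i = 0) (r : Fin n)
    (β : Fin n → ℝ) (h0 : ∀ i, 0 ≤ β i) (h1 : (∑ i, β i ^ 2) = 1) (t : ℝ) (ht : 0 ≤ t)
    (ht' : t ≤ ∑ i, ∑ j, β i * β j * c i j) :
    ∃ γ : Fin n → ℝ, (∀ i, 0 ≤ γ i) ∧ (∑ i, γ i ^ 2) = 1 ∧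
      t = ∑ i, ∑ j, γ i * γ j * c i j := by
  classical
  let g : ℝ → Fin n → ℝ := fun τ i =>
    if i = r then Real.sqrt (1 - τ ^ 2 * (1 - β r ^ 2)) else τ * β i
  have hsum : ∑ i ∈ Finset.univ.erase r, β i ^ 2 = 1 - β r ^ 2 := by
    rw [← h1, ← Finset.add_sum_erase _ _ (Finset.mem_univ r)]; ring
  have hle : 0 ≤ 1 - β r ^ 2 := hsum ▸ Finset.sum_nonneg (fun i _ => sq_nonneg _)
  have hcont : Continuous fun τ => ∑ i, ∑ j, g τ i * g τ j * c i j := by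
    have : ∀ i, Continuous fun τ => g τ i := by
      intro i
      by_cases h : i = r
      · simp only [g, h, if_true]; fun_prop
      · simp only [g, h, if_false]; fun_prop
    fun_prop
  have hg1 : g 1 = β := by
    funext i
    by_cases h : i = r
    · simp [g, h, Real.sqrt_sq (h0 r)]
    · simp [g, h]
  have hg0 : ∑ i, ∑ j, g 0 i * g 0 j * c i j = 0 := by
    refine Finset.sum_eq_zero fun i _ => Finset.sum_eq_zero fun j _ => ?_
    by_cases h : i = r
    · by_cases h' : j = r
      · rw [h, h', hc]; simp
      · simp [g, h']
    · simp [g, h]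
  obtain ⟨τ, ⟨hτ0, hτ1⟩, hτ⟩ := intermediate_value_Icc (zero_le_one' ℝ) hcont.continuousOn
    (show t ∈ Set.Icc _ _ from ⟨by simpa only [hg0] using ht, by simpa only [hg1] using ht'⟩)
  refine ⟨g τ, fun i => ?_, ?_, hτ.symm⟩
  · by_cases h : i = r
    · simp [g, h]
    · simp only [g, h, if_false]; exact mul_nonneg hτ0 (h0 i)
  · rw [← Finset.add_sum_erase _ _ (Finset.mem_univ r)]
    have : ∑ i ∈ Finset.univ.erase r, g τ i ^ 2 = τ ^ 2 * (1 - β r ^ 2) := by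
      rw [← hsum, Finset.mul_sum]
      refine Finset.sum_congr rfl fun i hi => ?_
      simp [g, Finset.ne_of_mem_erase hi, mul_pow]
    rw [this]
    simp only [g, if_true]
    rw [Real.sq_sqrt]
    · ring
    · nlinarith [sq_nonneg (β r), mul_nonneg hτ0 (sub_nonneg.2 hτ1)]

/-- If `A` is strictly upper triangular and a tree matrix, then `W(A)` is the
closed disk centered at the origin whose radius is the maximum of
`β ↦ ∑ᵢⱼ βᵢβⱼ|aᵢⱼ|` over `β ∈ S⁺_{ℝⁿ}`. -/
theorem tree_matrix_qnr_disk {n : ℕ} (A : Matrix (Fin n) (Fin n) (Quaternion ℝ))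
    (hupper : ∀ i j, j ≤ i → A i j = 0)
    (htree : (graphOf A).IsTree)
    (R : ℝ)
    (hR : IsGreatest {t | ∃ β : Fin n → ℝ, (∀ i, 0 ≤ β i) ∧ (∑ i, β i ^ 2) = 1 ∧
        t = ∑ i, ∑ j, β i * β j * ‖A i j‖} R) :
    qnr A = Metric.closedBall (0 : Quaternion ℝ) R := by
  obtain ⟨⟨β, h0, h1, hRe⟩, hub⟩ := hR
  ext q
  rw [mem_closedBall_zero_iff]
  constructor
  · rintro ⟨x, hx, rfl⟩
    refine le_trans ?_ (hub ⟨fun i => ‖x i‖, fun i => norm_nonneg _, hx, rfl⟩)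
    refine (norm_sum_le _ _).trans (Finset.sum_le_sum fun i _ => ?_)
    refine (norm_sum_le _ _).trans (Finset.sum_le_sum fun j _ => ?_)
    rw [norm_mul, norm_mul, norm_star]
    exact le_of_eq (by ring)
  · intro hq
    obtain ⟨r⟩ := htree.1.nonempty
    obtain ⟨γ, g0, g1, hγ⟩ := exists_beta (fun i j => ‖A i j‖)
      (fun i => by simp [hupper i i le_rfl]) r β h0 h1 ‖q‖ (norm_nonneg q) (hRe ▸ hq)
    obtain ⟨u, hu, hqu⟩ : ∃ u : Quaternion ℝ, ‖u‖ = 1 ∧ q = ‖q‖ • u := by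
      by_cases h : q = 0
      · exact ⟨1, by simp, by simp [h]⟩
      · have := norm_ne_zero_iff.2 h
        exact ⟨‖q‖⁻¹ • q, by simp [norm_smul, this], by simp [smul_smul, this]⟩
    obtain ⟨s, hs, hs'⟩ := exists_phases A hupper htree u hu
    refine ⟨fun i => γ i • s i, ?_, ?_⟩
    · rw [← g1]
      refine Finset.sum_congr rfl fun i _ => ?_
      rw [norm_smul, hs, mul_one, Real.norm_eq_abs, sq_abs]
    · rw [hqu, hγ, Finset.sum_smul]
      refine Finset.sum_congr rfl fun i _ => ?_
      rw [Finset.sum_smul]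
      refine Finset.sum_congr rfl fun j _ => ?_
      rw [Quaternion.star_smul, mul_smul, ← hs' i j]
      simp only [smul_mul_assoc, mul_smul_comm, smul_smul, mul_comm]
end

section
/- Let A = [a_{ij}] ∈ Mₙ(ℍ) have real diagonal entries d₁,…,dₙ ∈ ℝ, and set d̲ = min{d₁,…,dₙ}, d̄ = max{d₁,…,dₙ}. Define, for d ∈ [d̲, d̄], r(d) = max{∑_{i≠j} βᵢβⱼ|a_{ij}| : β ∈ S⁺_{ℝⁿ}, ∑ᵢ dᵢβᵢ² = d}. Then the function r is continuous on the interval [d̲, d̄]. -/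
open Set Filter Topology

/-- Mixing a maximiser with a coordinate vector gives a lower bound for `r`. -/
lemma radius_mix {n : ℕ} (w : Fin n → Fin n → ℝ) (hw : ∀ i j, 0 ≤ w i j)
    (d : Fin n → ℝ) (r : ℝ → ℝ) (c0 c t : ℝ) (k : Fin n)
    (h0 : ∃ β : Fin n → ℝ, (∀ i, 0 ≤ β i) ∧ (∑ i, β i ^ 2) = 1 ∧
        (∑ i, d i * β i ^ 2) = c0 ∧
        r c0 = ∑ i, ∑ j ∈ Finset.univ.filter (fun j => j ≠ i), β i * β j * w i j)
    (h1 : ∀ β : Fin n → ℝ, (∀ i, 0 ≤ β i) → (∑ i, β i ^ 2) = 1 →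
        (∑ i, d i * β i ^ 2) = c →
        ∑ i, ∑ j ∈ Finset.univ.filter (fun j => j ≠ i), β i * β j * w i j ≤ r c)
    (ht0 : 0 ≤ t) (ht1 : t ≤ 1) (hc : c = (1 - t) * c0 + t * d k) :
    (1 - t) * r c0 ≤ r c := by
  obtain ⟨b, hb0, hb1, hb2, hb3⟩ := h0
  have ht : 0 ≤ 1 - t := by linarith
  have hnn : ∀ i, 0 ≤ (1 - t) * b i ^ 2 + t * (if i = k then 1 else 0) := by
    intro i
    have : (0:ℝ) ≤ if i = k then 1 else 0 := by split_ifs <;> norm_num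
    have := sq_nonneg (b i)
    positivity
  have hsq : ∀ i, Real.sqrt ((1 - t) * b i ^ 2 + t * (if i = k then 1 else 0)) ^ 2
      = (1 - t) * b i ^ 2 + t * (if i = k then 1 else 0) := fun i => Real.sq_sqrt (hnn i)
  have hge : ∀ i, Real.sqrt (1 - t) * b i
      ≤ Real.sqrt ((1 - t) * b i ^ 2 + t * (if i = k then 1 else 0)) := by
    intro i
    apply Real.le_sqrt_of_sq_le
    rw [mul_pow, Real.sq_sqrt ht]
    have : (0:ℝ) ≤ if i = k then 1 else 0 := by split_ifs <;> norm_num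
    have := mul_nonneg ht0 this
    linarith
  refine le_trans ?_ (h1 (fun i => Real.sqrt ((1 - t) * b i ^ 2 + t * (if i = k then 1 else 0)))
    (fun i => Real.sqrt_nonneg _) ?_ ?_)
  · rw [hb3, Finset.mul_sum]
    refine Finset.sum_le_sum fun i _ => ?_
    rw [Finset.mul_sum]
    refine Finset.sum_le_sum fun j _ => ?_
    have h : (1 - t) * (b i * b j * w i j)
        = (Real.sqrt (1 - t) * b i) * (Real.sqrt (1 - t) * b j) * w i j := by
      have := Real.mul_self_sqrt ht
      linear_combination (-(b i * b j * w i j)) * this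
    rw [h]
    exact mul_le_mul_of_nonneg_right
      (mul_le_mul (hge i) (hge j) (mul_nonneg (Real.sqrt_nonneg _) (hb0 j)) (Real.sqrt_nonneg _))
      (hw i j)
  · simp only [hsq]
    rw [Finset.sum_add_distrib, ← Finset.mul_sum, ← Finset.mul_sum, hb1]
    simp
  · simp only [hsq]
    have : ∀ i, d i * ((1 - t) * b i ^ 2 + t * (if i = k then 1 else 0))
        = (1 - t) * (d i * b i ^ 2) + t * (d i * (if i = k then 1 else 0)) := fun i => by ring
    simp only [this]
    rw [Finset.sum_add_distrib, ← Finset.mul_sum, ← Finset.mul_sum, hb2, hc]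
    simp

/-- For a quaternionic matrix `A` with real diagonal entries `d₁, …, dₙ`, the
function `r(d) = max{∑_{i≠j} βᵢβⱼ|aᵢⱼ| : β ∈ S⁺_{ℝⁿ}, ∑ᵢ dᵢβᵢ² = d}` is continuous on
`[d̲, d̄]`, where `d̲` and `d̄` are the smallest and largest diagonal entries. -/
theorem radius_function_continuous {n : ℕ} (hn : 0 < n)
    (A : Matrix (Fin n) (Fin n) (Quaternion ℝ))
    (d : Fin n → ℝ) (hdiag : ∀ i, A i i = (d i : Quaternion ℝ))
    (dmin dmax : ℝ)
    (hmin : IsLeast (Set.range d) dmin) (hmax : IsGreatest (Set.range d) dmax)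
    (r : ℝ → ℝ)
    (hr : ∀ c ∈ Set.Icc dmin dmax,
      IsGreatest {t | ∃ β : Fin n → ℝ, (∀ i, 0 ≤ β i) ∧ (∑ i, β i ^ 2) = 1 ∧
        (∑ i, d i * β i ^ 2) = c ∧
        t = ∑ i, ∑ j ∈ Finset.univ.filter (fun j => j ≠ i), β i * β j * ‖A i j‖} (r c)) :
    ContinuousOn r (Set.Icc dmin dmax) := by
  have hmix := fun c0 (h0 : c0 ∈ Icc dmin dmax) c (hc : c ∈ Icc dmin dmax) t k =>
    radius_mix (fun i j => ‖A i j‖) (fun i j => norm_nonneg _) d r c0 c t k (hr c0 h0).1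
      (fun β h1 h2 h3 => (hr c hc).2 ⟨β, h1, h2, h3, rfl⟩)
  obtain ⟨⟨kmin, hkmin⟩, hlb⟩ := hmin
  obtain ⟨⟨kmax, hkmax⟩, hub⟩ := hmax
  intro c0 hc0
  refine tendsto_order.2 ⟨fun y hy => ?_, fun y hy => ?_⟩
  · -- lower semicontinuity
    have e1 : ∀ᶠ c in 𝓝[Icc dmin dmax] c0, c0 < dmax →
        y < (1 - (c - c0) / (dmax - c0)) * r c0 := by
      by_cases h : c0 < dmax
      · have hcont : Continuous fun c => (1 - (c - c0) / (dmax - c0)) * r c0 := by fun_prop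
        have := (hcont.tendsto c0).eventually (lt_mem_nhds (a := y) (by simpa using hy))
        filter_upwards [nhdsWithin_le_nhds this] with c hc _ using hc
      · exact Eventually.of_forall fun c hc => absurd hc h
    have e2 : ∀ᶠ c in 𝓝[Icc dmin dmax] c0, dmin < c0 →
        y < (1 - (c0 - c) / (c0 - dmin)) * r c0 := by
      by_cases h : dmin < c0
      · have hcont : Continuous fun c => (1 - (c0 - c) / (c0 - dmin)) * r c0 := by fun_prop
        have := (hcont.tendsto c0).eventually (lt_mem_nhds (a := y) (by simpa using hy))
        filter_upwards [nhdsWithin_le_nhds this] with c hc _ using hc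
      · exact Eventually.of_forall fun c hc => absurd hc h
    filter_upwards [e1, e2, self_mem_nhdsWithin] with c h1 h2 hc
    rcases lt_trichotomy c c0 with h | h | h
    · have hpos : dmin < c0 := lt_of_le_of_lt hc.1 h
      have hp : 0 < c0 - dmin := by linarith
      refine (h2 hpos).trans_le (hmix c0 hc0 c hc _ kmin (div_nonneg (by linarith) hp.le)
        ((div_le_one hp).2 (by linarith [hc.1])) ?_)
      rw [hkmin]
      field_simp
      ring
    · rw [h]; exact hy
    · have hpos : c0 < dmax := lt_of_lt_of_le h hc.2
      have hp : 0 < dmax - c0 := by linarith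
      refine (h1 hpos).trans_le (hmix c0 hc0 c hc _ kmax (div_nonneg (by linarith) hp.le)
        ((div_le_one hp).2 (by linarith [hc.2])) ?_)
      rw [hkmax]
      field_simp
      ring
  · -- upper semicontinuity
    let K : Set (Fin n → ℝ) := {β | (∀ i, 0 ≤ β i) ∧ (∑ i, β i ^ 2) = 1 ∧
      y ≤ ∑ i, ∑ j ∈ Finset.univ.filter (fun j => j ≠ i), β i * β j * ‖A i j‖}
    have hK : IsCompact K := by
      refine IsCompact.of_isClosed_subset
        (isCompact_univ_pi fun _ : Fin n => isCompact_Icc (a := (0:ℝ)) (b := 1)) ?_ ?_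
      · refine IsClosed.and ?_ (IsClosed.and ?_ ?_)
        · have : {β : Fin n → ℝ | ∀ i, 0 ≤ β i} = Ici 0 := by ext; rfl
          exact this ▸ isClosed_Ici
        · exact isClosed_eq (by fun_prop) continuous_const
        · exact isClosed_le continuous_const (by fun_prop)
      · rintro β ⟨h0, h1, -⟩ i -
        refine ⟨h0 i, ?_⟩
        have := Finset.single_le_sum (f := fun i => β i ^ 2) (fun i _ => sq_nonneg (β i))
          (Finset.mem_univ i)
        rw [h1] at this
        exact (sq_le_one_iff₀ (h0 i)).1 this
    have hcont : Continuous fun β : Fin n → ℝ => ∑ i, d i * β i ^ 2 := by fun_prop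
    have hcl := (hK.image hcont).isClosed
    have hnot : c0 ∉ Set.image (fun β : Fin n → ℝ => ∑ i, d i * β i ^ 2) K := by
      rintro ⟨β, ⟨h0, h1, h2⟩, h3⟩
      exact absurd (h2.trans ((hr c0 hc0).2 ⟨β, h0, h1, h3, rfl⟩)) (not_le.2 hy)
    filter_upwards [nhdsWithin_le_nhds (hcl.isOpen_compl.mem_nhds hnot),
      self_mem_nhdsWithin] with c hc hcI
    by_contra hlt
    obtain ⟨β, h0, h1, h2, h3⟩ := (hr c hcI).1
    exact hc ⟨β, ⟨h0, h1, h3 ▸ not_lt.1 hlt⟩, h2⟩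
end

section
/- Let A = D + N ∈ Mₙ(ℍ), where D = diag(d₁,…,dₙ) with d₁,…,dₙ ∈ ℝ and N = [a_{ij}] is strictly upper triangular (a_{ij} = 0 for i ≥ j) and a tree matrix. Set d̲ = min{d₁,…,dₙ}, d̄ = max{d₁,…,dₙ}, and for d ∈ [d̲, d̄] let r(d) = max{∑_{i≠j} βᵢβⱼ|a_{ij}| : β ∈ S⁺_{ℝⁿ}, ∑ᵢ dᵢβᵢ² = d}. Then W(A) = ⋃_{d ∈ [d̲, d̄]} 𝔻_ℍ(d, r(d)). -/
/-- Transport along a walk. -/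
def walkTransport {V α : Type*} {G : SimpleGraph V} (T : V → V → α → α) :
    {u v : V} → G.Walk u v → α → α
  | _, _, SimpleGraph.Walk.nil => fun x => x
  | _, _, SimpleGraph.Walk.cons (u := a) (v := b) _ p => fun x => walkTransport T p (T a b x)

theorem walkTransport_concat {V α : Type*} {G : SimpleGraph V} (T : V → V → α → α)
    {u v w : V} (p : G.Walk u v) (h : G.Adj v w) (x : α) :
    walkTransport T (p.concat h) x = T v w (walkTransport T p x) := by
  induction p generalizing x with
  | nil => rfl
  | cons h' p ih =>
    rw [SimpleGraph.Walk.concat_cons]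
    simp only [walkTransport]
    exact ih h _

theorem walkTransport_pred {V α : Type*} {G : SimpleGraph V} (T : V → V → α → α)
    (P : α → Prop) (hT : ∀ i j x, G.Adj i j → P x → P (T i j x))
    {u v : V} (p : G.Walk u v) (x : α) (hx : P x) : P (walkTransport T p x) := by
  induction p generalizing x with
  | nil => exact hx
  | cons h' p ih => exact ih _ (hT _ _ _ h' hx)

theorem tree_labeling {V α : Type*} {G : SimpleGraph V} (hG : G.IsTree) (T : V → V → α → α)
    (P : α → Prop) (hT : ∀ i j x, G.Adj i j → P x → P (T i j x))
    (hinv : ∀ i j x, G.Adj i j → P x → T j i (T i j x) = x) (x : α) (hx : P x) :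
    ∃ f : V → α, (∀ v, P (f v)) ∧ ∀ v w, G.Adj v w → f w = T v w (f v) := by
  obtain ⟨u⟩ := hG.connected.nonempty
  choose p hp _ using fun v => hG.existsUnique_path u v
  have hP : ∀ v, P (walkTransport T (p v) x) := fun v => walkTransport_pred T P hT _ _ hx
  refine ⟨fun v => walkTransport T (p v) x, hP, fun v w hvw => ?_⟩
  by_cases hv : v ∈ (p w).support
  · change walkTransport T (p w) x = _
    rw [hG.isAcyclic.path_concat (hp v) (hp w) hvw hv, walkTransport_concat]
  · have hw := hG.isAcyclic.mem_support_of_ne_mem_support_of_adj_of_isPath (hp v) (hp w) hvw hv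
    have := hG.isAcyclic.path_concat (hp w) (hp v) hvw.symm hw
    change _ = T v w (walkTransport T (p v) x)
    rw [this, walkTransport_concat, hinv _ _ _ hvw.symm (hP w)]

theorem quat_star_mul_self (x : Quaternion ℝ) : star x * x = ((‖x‖ ^ 2 : ℝ) : Quaternion ℝ) := by
  rw [Quaternion.star_mul_self, Quaternion.normSq_eq_norm_mul_self, sq]

theorem quat_self_mul_star (x : Quaternion ℝ) : x * star x = ((‖x‖ ^ 2 : ℝ) : Quaternion ℝ) := by
  rw [Quaternion.self_mul_star, Quaternion.normSq_eq_norm_mul_self, sq]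

theorem phases {n : ℕ} (N : Matrix (Fin n) (Fin n) (Quaternion ℝ))
    (hN : ∀ i j, j ≤ i → N i j = 0) (htree : (graphOf N).IsTree)
    (u : Quaternion ℝ) (hu : ‖u‖ = 1) :
    ∃ w : Fin n → Quaternion ℝ, (∀ i, ‖w i‖ = 1) ∧
      ∀ i j, star (w i) * N i j * w j = ((‖N i j‖ : ℝ) : Quaternion ℝ) * u := by
  have hasym : ∀ i j, N i j ≠ 0 → N j i = 0 := fun i j h =>
    hN j i (le_of_lt (not_le.mp fun h' => h (hN i j h')))
  have hadj : ∀ i j, (graphOf N).Adj i j → (N i j ≠ 0 ∧ N j i = 0) ∨ (N i j = 0 ∧ N j i ≠ 0) := by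
    intro i j h
    rw [graphOf, SimpleGraph.fromRel_adj] at h
    rcases h.2 with h | h
    · exact Or.inl ⟨h, hasym _ _ h⟩
    · exact Or.inr ⟨hasym _ _ h, h⟩
  let e : Fin n → Fin n → Quaternion ℝ := fun i j => (‖N i j‖⁻¹ : ℝ) • N i j
  have he : ∀ i j, N i j ≠ 0 → ‖e i j‖ = 1 := by
    intro i j h
    simp only [e]
    rw [norm_smul, norm_inv, norm_norm, inv_mul_cancel₀ (norm_ne_zero_iff.mpr h)]
  have hNe : ∀ i j, N i j ≠ 0 → N i j = (‖N i j‖ : ℝ) • e i j := by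
    intro i j h
    simp only [e]
    rw [smul_smul, mul_inv_cancel₀ (norm_ne_zero_iff.mpr h), one_smul]
  have s1 : ∀ x : Quaternion ℝ, ‖x‖ = 1 → star x * x = 1 := by
    intro x hx; rw [quat_star_mul_self, hx]; simp
  have s2 : ∀ x : Quaternion ℝ, ‖x‖ = 1 → x * star x = 1 := by
    intro x hx; rw [quat_self_mul_star, hx]; simp
  classical
  obtain ⟨w, hw1, hw2⟩ := tree_labeling htree
    (fun i j x => if N i j ≠ 0 then star (e i j) * x * u else e j i * x * star u)
    (fun x => ‖x‖ = 1) (by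
      intro i j x h hx
      rcases hadj i j h with ⟨h1, h2⟩ | ⟨h1, h2⟩
      · simp [h1, hx, hu, he]
      · simp [h1, hx, hu, he j i h2]) (by
      intro i j x h hx
      rcases hadj i j h with ⟨h1, h2⟩ | ⟨h1, h2⟩
      · simp only [h1, h2, ne_eq, not_true_eq_false, not_false_eq_true, if_true, if_false]
        calc e i j * (star (e i j) * x * u) * star u
            = (e i j * star (e i j)) * x * (u * star u) := by noncomm_ring
          _ = x := by rw [s2 _ (he i j h1), s2 u hu]; simp
      · simp only [h1, h2, ne_eq, not_true_eq_false, not_false_eq_true, if_true, if_false]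
        calc star (e j i) * (e j i * x * star u) * u
            = (star (e j i) * e j i) * x * (star u * u) := by noncomm_ring
          _ = x := by rw [s1 _ (he j i h2), s1 u hu]; simp) 1 (by simp)
  refine ⟨w, hw1, fun i j => ?_⟩
  by_cases h : N i j = 0
  · simp [h]
  · have ha : (graphOf N).Adj i j := by
      rw [graphOf, SimpleGraph.fromRel_adj]
      refine ⟨?_, Or.inl h⟩
      rintro rfl
      exact h (hN _ _ le_rfl)
    have hj := hw2 i j ha
    simp only [ne_eq, h, not_false_eq_true, if_true] at hj
    rw [hj]
    conv_lhs => rw [hNe i j h]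
    rw [mul_smul_comm, smul_mul_assoc]
    have : star (w i) * e i j * (star (e i j) * w i * u) = u := by
      calc _ = star (w i) * (e i j * star (e i j)) * w i * u := by noncomm_ring
        _ = u := by rw [s2 _ (he i j h), mul_one, s1 _ (hw1 i), one_mul]
    rw [this, Quaternion.coe_mul_eq_smul]

theorem qform_split {n : ℕ} (N : Matrix (Fin n) (Fin n) (Quaternion ℝ)) (d : Fin n → ℝ)
    (x : Fin n → Quaternion ℝ) :
    ∑ i, ∑ j, star (x i) *
      (Matrix.diagonal (fun i => ((d i : ℝ) : Quaternion ℝ)) + N) i j * x j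
    = ((∑ i, d i * ‖x i‖ ^ 2 : ℝ) : Quaternion ℝ) + ∑ i, ∑ j, star (x i) * N i j * x j := by
  simp only [Matrix.add_apply, mul_add, add_mul, Finset.sum_add_distrib]
  congr 1
  have hc : ((∑ i, d i * ‖x i‖ ^ 2 : ℝ) : Quaternion ℝ)
      = ∑ i, ((d i * ‖x i‖ ^ 2 : ℝ) : Quaternion ℝ) :=
    by simpa only [Quaternion.algebraMap_def] using
      map_sum (algebraMap ℝ (Quaternion ℝ)) (fun i => d i * ‖x i‖ ^ 2) Finset.univ
  rw [hc]
  refine Finset.sum_congr rfl fun i _ => ?_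
  rw [Finset.sum_eq_single i]
  · rw [Matrix.diagonal_apply_eq, ← Quaternion.coe_commutes, mul_assoc, quat_star_mul_self,
      Quaternion.coe_mul]
  · intro j _ hj
    rw [Matrix.diagonal_apply_ne _ hj.symm]; simp
  · simp

theorem sum_offdiag {n : ℕ} (N : Matrix (Fin n) (Fin n) (Quaternion ℝ))
    (hN : ∀ i j, j ≤ i → N i j = 0) (β : Fin n → ℝ) :
    ∑ i, ∑ j ∈ Finset.univ.filter (fun j => j ≠ i), β i * β j * ‖N i j‖
    = ∑ i, ∑ j, β i * β j * ‖N i j‖ := by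
  refine Finset.sum_congr rfl fun i _ => ?_
  refine Finset.sum_subset (Finset.filter_subset _ _) fun j _ hj => ?_
  have : j = i := by simpa using hj
  rw [this, hN i i le_rfl]; simp

/-- If `A = D + N` with `D` a real diagonal matrix and `N` a strictly upper
triangular tree matrix, then `W(A) = ⋃_{d ∈ [d̲, d̄]} 𝔻_ℍ(d, r(d))`, where
`r(d) = max{∑_{i≠j} βᵢβⱼ|aᵢⱼ| : β ∈ S⁺_{ℝⁿ}, ∑ᵢ dᵢβᵢ² = d}`. -/
theorem qnr_diag_plus_tree_eq_union_disks {n : ℕ}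
    (N : Matrix (Fin n) (Fin n) (Quaternion ℝ)) (d : Fin n → ℝ)
    (hN : ∀ i j, j ≤ i → N i j = 0)
    (htree : (graphOf N).IsTree)
    (dmin dmax : ℝ)
    (hmin : IsLeast (Set.range d) dmin) (hmax : IsGreatest (Set.range d) dmax)
    (r : ℝ → ℝ)
    (hr : ∀ c ∈ Set.Icc dmin dmax,
      IsGreatest {t | ∃ β : Fin n → ℝ, (∀ i, 0 ≤ β i) ∧ (∑ i, β i ^ 2) = 1 ∧
        (∑ i, d i * β i ^ 2) = c ∧
        t = ∑ i, ∑ j ∈ Finset.univ.filter (fun j => j ≠ i), β i * β j * ‖N i j‖} (r c)) :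
    qnr (Matrix.diagonal (fun i => ((d i : ℝ) : Quaternion ℝ)) + N) =
      ⋃ c ∈ Set.Icc dmin dmax, Metric.closedBall ((c : ℝ) : Quaternion ℝ) (r c) := by
  simp only [sum_offdiag N hN] at hr
  ext q
  simp only [Set.mem_iUnion, exists_prop, Metric.mem_closedBall, dist_eq_norm, qnr,
    Set.mem_ofPred_eq]
  constructor
  · rintro ⟨x, hx, rfl⟩
    have hc : (∑ i, d i * ‖x i‖ ^ 2) ∈ Set.Icc dmin dmax := by
      constructor
      · calc dmin = ∑ i, dmin * ‖x i‖ ^ 2 := by rw [← Finset.mul_sum, hx, mul_one]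
          _ ≤ _ := Finset.sum_le_sum fun i _ =>
            mul_le_mul_of_nonneg_right (hmin.2 ⟨i, rfl⟩) (by positivity)
      · calc (∑ i, d i * ‖x i‖ ^ 2) ≤ ∑ i, dmax * ‖x i‖ ^ 2 := Finset.sum_le_sum fun i _ =>
            mul_le_mul_of_nonneg_right (hmax.2 ⟨i, rfl⟩) (by positivity)
          _ = dmax := by rw [← Finset.mul_sum, hx, mul_one]
    refine ⟨_, hc, ?_⟩
    rw [qform_split, add_sub_cancel_left]
    refine le_trans ?_ ((hr _ hc).2 ⟨fun i => ‖x i‖, fun i => norm_nonneg _, hx, rfl, rfl⟩)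
    refine (norm_sum_le _ _).trans (Finset.sum_le_sum fun i _ => ?_)
    refine (norm_sum_le _ _).trans (Finset.sum_le_sum fun j _ => ?_)
    rw [norm_mul, norm_mul, Quaternion.norm_star]
    exact le_of_eq (by ring)
  · rintro ⟨c, hc, hq⟩
    obtain ⟨β, hβ0, hβ1, hβc, hβr⟩ := (hr c hc).1
    obtain ⟨k⟩ := htree.connected.nonempty
    -- the path from the vertex `k` to `β`
    let γ : ℝ → Fin n → ℝ := fun t i =>
      Real.sqrt ((1 - t) * (if i = k then 1 else 0) + t * β i ^ 2)
    have hγsq : ∀ t ∈ Set.Icc (0 : ℝ) 1, ∀ i,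
        γ t i ^ 2 = (1 - t) * (if i = k then 1 else 0) + t * β i ^ 2 := by
      intro t ht i
      refine Real.sq_sqrt ?_
      have h1 := sub_nonneg.mpr ht.2
      have h2 := ht.1
      split_ifs <;> positivity
    have hγ1 : γ 1 = β := by
      funext i
      simp [γ, Real.sqrt_sq (hβ0 i)]
    have hγ0 : ∀ i, γ 0 i = if i = k then 1 else 0 := by
      intro i
      simp only [γ]
      split_ifs <;> simp
    let g : ℝ → ℝ := fun t => ‖q - ((∑ i, d i * γ t i ^ 2 : ℝ) : Quaternion ℝ)‖ -
      ∑ i, ∑ j, γ t i * γ t j * ‖N i j‖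
    have hγc : ∀ i, Continuous fun t => γ t i := by
      intro i
      simp only [γ]
      fun_prop
    have hg : Continuous g := by
      have h1 : Continuous fun t => ((∑ i, d i * γ t i ^ 2 : ℝ) : Quaternion ℝ) :=
        Quaternion.continuous_coe.comp
          (continuous_finsetSum _ fun i _ => continuous_const.mul ((hγc i).pow 2))
      refine (continuous_const.sub h1).norm.sub ?_
      exact continuous_finsetSum _ fun i _ => continuous_finsetSum _ fun j _ =>
        ((hγc i).mul (hγc j)).mul continuous_const
    have hg1 : g 1 ≤ 0 := by
      simp only [g, hγ1, hβc, ← hβr]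
      linarith
    have hg0 : 0 ≤ g 0 := by
      have : ∑ i, ∑ j, γ 0 i * γ 0 j * ‖N i j‖ = 0 := by
        refine Finset.sum_eq_zero fun i _ => Finset.sum_eq_zero fun j _ => ?_
        rw [hγ0, hγ0]
        split_ifs with h1 h2
        · rw [h1, h2, hN k k le_rfl]; simp
        all_goals simp
      simp only [g, this, sub_zero]
      exact norm_nonneg _
    obtain ⟨t, ht, hgt⟩ := intermediate_value_Icc' zero_le_one hg.continuousOn ⟨hg1, hg0⟩
    have hsum : ∑ i, γ t i ^ 2 = 1 := by
      rw [Finset.sum_congr rfl fun i _ => hγsq t ht i, Finset.sum_add_distrib, ← Finset.mul_sum,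
        ← Finset.mul_sum, hβ1]
      simp
    have hγnn : ∀ i, 0 ≤ γ t i := fun i => Real.sqrt_nonneg _
    have hgt' : ‖q - ((∑ i, d i * γ t i ^ 2 : ℝ) : Quaternion ℝ)‖ =
      ∑ i, ∑ j, γ t i * γ t j * ‖N i j‖ := sub_eq_zero.mp hgt
    generalize γ t = b at hsum hγnn hgt'
    obtain ⟨u, hu, hqu⟩ : ∃ u : Quaternion ℝ, ‖u‖ = 1 ∧
        q - ((∑ i, d i * b i ^ 2 : ℝ) : Quaternion ℝ) =
          ‖q - ((∑ i, d i * b i ^ 2 : ℝ) : Quaternion ℝ)‖ • u := by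
      generalize q - ((∑ i, d i * b i ^ 2 : ℝ) : Quaternion ℝ) = z
      by_cases hz : z = 0
      · exact ⟨1, by simp, by simp [hz]⟩
      · have hz' := norm_ne_zero_iff.mpr hz
        refine ⟨‖z‖⁻¹ • z, ?_, ?_⟩
        · rw [norm_smul, norm_inv, norm_norm, inv_mul_cancel₀ hz']
        · rw [smul_smul, mul_inv_cancel₀ hz', one_smul]
    obtain ⟨w, hw1, hw2⟩ := phases N hN htree u hu
    have hnorm : ∀ i, ‖b i • w i‖ = b i := by
      intro i
      rw [norm_smul, hw1, mul_one, Real.norm_of_nonneg (hγnn i)]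
    refine ⟨fun i => b i • w i, ?_, ?_⟩
    · simpa only [hnorm] using hsum
    · rw [qform_split]
      simp only [hnorm]
      rw [← sub_eq_iff_eq_add', hqu, hgt', Finset.sum_smul]
      refine Finset.sum_congr rfl fun i _ => ?_
      rw [Finset.sum_smul]
      refine Finset.sum_congr rfl fun j _ => ?_
      rw [Quaternion.star_smul, smul_mul_assoc, smul_mul_assoc, mul_smul_comm, hw2,
        Quaternion.coe_mul_eq_smul, smul_smul, smul_smul]
end

section
/- Let A ∈ M₃(ℍ) be strictly upper triangular (a_{ij} = 0 for i ≥ j), with entries a₁₂, a₁₃, a₂₃ above the diagonal. Then W(A) is a disk with center at the origin (i.e. there exists r ≥ 0 with W(A) = 𝔻_ℍ(0, r)) if and only if A is cycle-free, equivalently if and only if a₁₂ a₁₃ a₂₃ = 0. -/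
open Quaternion
/-- real max -/
theorem exists_max (a b c : ℝ) : ∃ p : ℝ × ℝ × ℝ, |p.1|^2+|p.2.1|^2+|p.2.2|^2 = 1 ∧
   ∀ q : ℝ × ℝ × ℝ, |q.1|^2+|q.2.1|^2+|q.2.2|^2 = 1 →
    a*|q.1| *|q.2.1| + b*|q.1| *|q.2.2| + c*|q.2.1| *|q.2.2| ≤ a*|p.1| *|p.2.1| + b*|p.1| *|p.2.2| + c*|p.2.1| *|p.2.2| := by
  have hc : IsCompact {q : ℝ × ℝ × ℝ | |q.1|^2+|q.2.1|^2+|q.2.2|^2 = 1} := by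
    apply Metric.isCompact_of_isClosed_isBounded
    · exact isClosed_eq (by fun_prop) (by fun_prop)
    · refine (Metric.isBounded_closedBall (x := (0 : ℝ × ℝ × ℝ)) (r := 1)).subset ?_
      rintro ⟨x, y, z⟩ h
      simp only [Set.mem_ofPred_eq] at h
      simp only [mem_closedBall_zero_iff, Prod.norm_def, Real.norm_eq_abs, sup_le_iff]
      refine ⟨?_, ?_, ?_⟩ <;> apply le_of_sq_le_sq <;> nlinarith [sq_nonneg |x|, sq_nonneg |y|, sq_nonneg |z|]
  obtain ⟨p, hp, hm⟩ := hc.exists_isMaxOn ⟨(1, 0, 0), by simp⟩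
    (f := fun q : ℝ × ℝ × ℝ => a*|q.1| *|q.2.1| + b*|q.1| *|q.2.2| + c*|q.2.1| *|q.2.2|) (by fun_prop)
  exact ⟨p, hp, fun q hq => hm hq⟩

theorem real_max (a b c : ℝ) : ∃ x y z : ℝ, 0 ≤ x ∧ 0 ≤ y ∧ 0 ≤ z ∧ x^2+y^2+z^2 = 1 ∧
   ∀ u v w : ℝ, 0 ≤ u → 0 ≤ v → 0 ≤ w →
    a*u*v + b*u*w + c*v*w ≤ (a*x*y + b*x*z + c*y*z) * (u^2+v^2+w^2) := by
  obtain ⟨p, hp, hm⟩ := exists_max a b c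
  refine ⟨|p.1|, |p.2.1|, |p.2.2|, abs_nonneg _, abs_nonneg _, abs_nonneg _, hp, ?_⟩
  intro u v w hu hv hw
  rcases eq_or_lt_of_le (show 0 ≤ u^2+v^2+w^2 by positivity) with h | h
  · have : u = 0 := by nlinarith [sq_nonneg u, sq_nonneg v, sq_nonneg w]
    have : v = 0 := by nlinarith [sq_nonneg u, sq_nonneg v, sq_nonneg w]
    have : w = 0 := by nlinarith [sq_nonneg u, sq_nonneg v, sq_nonneg w]
    subst u v w; simp
  · set n := √(u^2+v^2+w^2) with hn
    have hn2 : n^2 = u^2+v^2+w^2 := Real.sq_sqrt h.le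
    have hn0 : 0 < n := Real.sqrt_pos.2 h
    have := hm (u/n, v/n, w/n) (by
      simp only [sq_abs]; field_simp; linarith)
    simp only [abs_of_nonneg (div_nonneg hu hn0.le), abs_of_nonneg (div_nonneg hv hn0.le), abs_of_nonneg (div_nonneg hw hn0.le)] at this
    have h3 : a * (u / n) * (v / n) + b * (u / n) * (w / n) + c * (v / n) * (w / n) = (a*u*v+b*u*w+c*v*w)/n^2 := by
      field_simp
    rw [h3, div_le_iff₀ (by positivity), hn2] at this
    exact this

/-- first coordinate positive at a maximizer -/
theorem pos_of_max {a b c m u v w : ℝ} (ha : 0 < a) (hb : 0 < b) (hc : 0 < c)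
   (hu : 0 ≤ u) (hv : 0 ≤ v) (hw : 0 ≤ w) (h1 : u^2+v^2+w^2 = 1)
   (hm : ∀ u v w : ℝ, 0 ≤ u → 0 ≤ v → 0 ≤ w → a*u*v + b*u*w + c*v*w ≤ m * (u^2+v^2+w^2))
   (he : a*u*v + b*u*w + c*v*w = m) : 0 < u := by
  rcases hu.eq_or_lt with h | h
  swap
  · exact h
  exfalso
  subst h
  have hm0 : 0 < m := by
    have := hm 1 1 1 (by norm_num) (by norm_num) (by norm_num)
    nlinarith
  have hL : 0 ≤ a*v+b*w := by positivity
  have h2 := hm ((a*v+b*w)/(2*m)) v w (by positivity) hv hw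
  have h4 : v^2+w^2 = 1 := by linarith
  have h3 : (a*v+b*w)/(2*m)*(a*v+b*w) ≤ m*((a*v+b*w)/(2*m))^2 := by nlinarith
  have h5 : m*((a*v+b*w)/(2*m))^2 = (a*v+b*w)^2/(4*m) := by field_simp; ring
  have h6 : (a*v+b*w)/(2*m)*(a*v+b*w) = 2*((a*v+b*w)^2/(4*m)) := by field_simp; ring
  rw [h5, h6] at h3
  have h7 : (a*v+b*w)^2/(4*m) ≤ 0 := by linarith
  have h8 : (a*v+b*w)^2 ≤ 0 := by
    by_contra hh
    push Not at hh
    have : 0 < (a*v+b*w)^2/(4*m) := by positivity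
    linarith
  have h9 : a*v+b*w = 0 := by nlinarith
  have : 0 ≤ a*v := by positivity
  have : 0 ≤ b*w := by positivity
  have hv0 : v = 0 := by
    have : a*v = 0 := by linarith
    simpa [ha.ne'] using this
  have hw0 : w = 0 := by
    have : b*w = 0 := by linarith
    simpa [hb.ne'] using this
  subst v w; norm_num at h4

theorem re_eq_norm {q : ℍ[ℝ]} (h : q.re = ‖q‖) : q = (‖q‖ : ℍ[ℝ]) := by
  have h2 : q.re*q.re + q.imI*q.imI+q.imJ*q.imJ+q.imK*q.imK = ‖q‖*‖q‖ := by
    rw [← Quaternion.normSq_eq_norm_mul_self, Quaternion.normSq_def']; ring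
  rw [h] at h2
  ext
  · simpa using h
  all_goals simp; nlinarith [sq_nonneg q.imI, sq_nonneg q.imJ, sq_nonneg q.imK]
theorem re_le_norm (q : ℍ[ℝ]) : q.re ≤ ‖q‖ := by
  have h2 : q.re*q.re + q.imI*q.imI+q.imJ*q.imJ+q.imK*q.imK = ‖q‖*‖q‖ := by
    rw [← Quaternion.normSq_eq_norm_mul_self, Quaternion.normSq_def']; ring
  apply le_of_sq_le_sq <;> nlinarith [sq_nonneg q.imI, sq_nonneg q.imJ, sq_nonneg q.imK, norm_nonneg q]

theorem mem_qnr_iff (A : Matrix (Fin 3) (Fin 3) (Quaternion ℝ))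
    (hupper : ∀ i j, j ≤ i → A i j = 0) (q : ℍ[ℝ]) : q ∈ qnr A ↔
    ∃ x y z : ℍ[ℝ], ‖x‖^2 + ‖y‖^2 + ‖z‖^2 = 1 ∧
      q = star x * A 0 1 * y + star x * A 0 2 * z + star y * A 1 2 * z := by
  have h00 := hupper 0 0 (by decide)
  have h10 := hupper 1 0 (by decide)
  have h11 := hupper 1 1 (by decide)
  have h20 := hupper 2 0 (by decide)
  have h21 := hupper 2 1 (by decide)
  have h22 := hupper 2 2 (by decide)
  constructor
  · rintro ⟨x, hx, hq⟩
    refine ⟨x 0, x 1, x 2, ?_, ?_⟩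
    · simpa [Fin.sum_univ_three] using hx
    · simpa [Fin.sum_univ_three, h00, h10, h11, h20, h21, h22] using hq
  · rintro ⟨x, y, z, hx, hq⟩
    refine ⟨![x, y, z], ?_, ?_⟩
    · simpa [Fin.sum_univ_three] using hx
    · simpa [Fin.sum_univ_three, h00, h10, h11, h20, h21, h22] using hq

theorem graph_acyclic_iff (A : Matrix (Fin 3) (Fin 3) (Quaternion ℝ))
    (hupper : ∀ i j, j ≤ i → A i j = 0) :
    (graphOf A).IsAcyclic ↔ A 0 1 * A 0 2 * A 1 2 = 0 := by
  have h10 := hupper 1 0 (by decide)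
  have h20 := hupper 2 0 (by decide)
  have h21 := hupper 2 1 (by decide)
  constructor
  · intro h
    by_contra hne
    have hf := h.cliqueFree le_rfl
    simp only [mul_eq_zero, not_or] at hne
    apply hf {0, 1, 2}
    rw [SimpleGraph.is3Clique_triple_iff]
    simp [graphOf, hne]
  · intro h
    have key : ∀ i : Fin 3, (graphOf A ≤ SimpleGraph.starGraph i) → (graphOf A).IsAcyclic :=
      fun i hi => (SimpleGraph.isAcyclic_starGraph i).anti hi
    simp only [mul_eq_zero] at h
    rcases h with (h | h) | h
    · apply key 2
      intro i j
      fin_cases i <;> fin_cases j <;> simp [graphOf, SimpleGraph.starGraph, h, h10, h20, h21]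
    · apply key 1
      intro i j
      fin_cases i <;> fin_cases j <;> simp [graphOf, SimpleGraph.starGraph, h, h10, h20, h21]
    · apply key 0
      intro i j
      fin_cases i <;> fin_cases j <;> simp [graphOf, SimpleGraph.starGraph, h, h10, h20, h21]

theorem norm_form_le (a b c x y z : ℍ[ℝ]) :
    ‖star x * a * y + star x * b * z + star y * c * z‖ ≤
      ‖a‖*‖x‖*‖y‖ + ‖b‖*‖x‖*‖z‖ + ‖c‖*‖y‖*‖z‖ := by
  refine (norm_add₃_le).trans (le_of_eq ?_)
  simp only [norm_mul, Quaternion.norm_star]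
  ring

/-- Equality case. -/
theorem aligned {a b c x y z : ℍ[ℝ]} {m e : ℝ} (he : e = 1 ∨ e = -1)
    (ha : a ≠ 0) (hb : b ≠ 0) (hc : c ≠ 0)
    (hm : ∀ u v w : ℝ, 0 ≤ u → 0 ≤ v → 0 ≤ w →
      ‖a‖*u*v + ‖b‖*u*w + ‖c‖*v*w ≤ m * (u^2+v^2+w^2))
    (h1 : ‖x‖^2 + ‖y‖^2 + ‖z‖^2 = 1)
    (hq : ((e * m : ℝ) : ℍ[ℝ]) = star x * a * y + star x * b * z + star y * c * z) :
    ∃ κ : ℝ, 0 < κ ∧ a * c = (e * κ) • b := by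
  have ha' := norm_pos_iff.2 ha
  have hb' := norm_pos_iff.2 hb
  have hc' := norm_pos_iff.2 hc
  have he2 : e * e = 1 := by rcases he with h | h <;> rw [h] <;> norm_num
  have hle := hm ‖x‖ ‖y‖ ‖z‖ (norm_nonneg _) (norm_nonneg _) (norm_nonneg _)
  rw [h1, mul_one] at hle
  have hen : |e| = 1 := by rcases he with h | h <;> rw [h] <;> norm_num
  set T1 := star x * a * y with hT1
  set T2 := star x * b * z with hT2
  set T3 := star y * c * z with hT3
  have n1 : ‖e • T1‖ = ‖a‖*‖x‖*‖y‖ := by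
    rw [norm_smul, Real.norm_eq_abs, hen, hT1]; simp only [norm_mul, Quaternion.norm_star]; ring
  have n2 : ‖e • T2‖ = ‖b‖*‖x‖*‖z‖ := by
    rw [norm_smul, Real.norm_eq_abs, hen, hT2]; simp only [norm_mul, Quaternion.norm_star]; ring
  have n3 : ‖e • T3‖ = ‖c‖*‖y‖*‖z‖ := by
    rw [norm_smul, Real.norm_eq_abs, hen, hT3]; simp only [norm_mul, Quaternion.norm_star]; ring
  have hre : m = (e • T1).re + (e • T2).re + (e • T3).re := by
    have h5 : e * m = T1.re + T2.re + T3.re := by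
      have := congrArg (fun q : ℍ[ℝ] => q.re) hq
      simpa using this
    have h6 : ∀ q : ℍ[ℝ], (e • q).re = e * q.re := fun q => by simp
    rw [h6, h6, h6, ← mul_add, ← mul_add, ← h5, ← mul_assoc, he2, one_mul]
  have r1 := re_le_norm (e • T1)
  have r2 := re_le_norm (e • T2)
  have r3 := re_le_norm (e • T3)
  have hmax : ‖a‖*‖x‖*‖y‖ + ‖b‖*‖x‖*‖z‖ + ‖c‖*‖y‖*‖z‖ = m := by linarith
  have e1 := re_eq_norm (show (e • T1).re = ‖e • T1‖ by linarith)
  have e2 := re_eq_norm (show (e • T2).re = ‖e • T2‖ by linarith)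
  have e3 := re_eq_norm (show (e • T3).re = ‖e • T3‖ by linarith)
  have px : 0 < ‖x‖ := pos_of_max ha' hb' hc' (norm_nonneg _) (norm_nonneg _) (norm_nonneg _) h1 hm hmax
  have py : 0 < ‖y‖ := pos_of_max (a := ‖a‖) (b := ‖c‖) (c := ‖b‖) (m := m) (v := ‖x‖) (w := ‖z‖)
    ha' hc' hb' (norm_nonneg _) (norm_nonneg _) (norm_nonneg _) (by linarith)
    (fun u v w hu hv hw => by have := hm v u w hv hu hw; nlinarith) (by linarith)
  have pz : 0 < ‖z‖ := pos_of_max (a := ‖b‖) (b := ‖c‖) (c := ‖a‖) (m := m) (v := ‖x‖) (w := ‖y‖)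
    hb' hc' ha' (norm_nonneg _) (norm_nonneg _) (norm_nonneg _) (by linarith)
    (fun u v w hu hv hw => by have := hm v w u hv hw hu; nlinarith) (by linarith)
  rw [n1] at e1
  rw [n2] at e2
  rw [n3] at e3
  have hx : star x ≠ 0 := by simpa using norm_pos_iff.1 px
  have hz : z ≠ 0 := norm_pos_iff.1 pz
  have hy2 : y * star y = ((‖y‖^2 : ℝ) : ℍ[ℝ]) := by
    rw [Quaternion.self_mul_star, Quaternion.normSq_eq_norm_mul_self, sq]
  have prod : T1 * T3 = ‖y‖^2 • (star x * (a * c) * z) := by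
    calc T1 * T3 = star x * a * (y * star y) * c * z := by rw [hT1, hT3]; noncomm_ring
      _ = _ := by
        rw [hy2, Quaternion.mul_coe_eq_smul]; simp only [smul_mul_assoc, mul_assoc]
  have prod2 : T1 * T3 = ((‖a‖*‖x‖*‖y‖ * (‖c‖*‖y‖*‖z‖) : ℝ) : ℍ[ℝ]) := by
    calc T1 * T3 = (e • T1) * (e • T3) := by rw [smul_mul_smul_comm, he2, one_smul]
      _ = _ := by rw [e1, e3]; push_cast; rfl
  have hT2' : ((‖b‖*‖x‖*‖z‖ : ℝ) : ℍ[ℝ]) = e • T2 := e2.symm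
  have hT2' : ((‖b‖*‖x‖*‖z‖ : ℝ) : ℍ[ℝ]) = star x * (e • b) * z := by
    rw [hT2', hT2]; simp only [smul_mul_assoc, mul_smul_comm]
  refine ⟨‖a‖*‖c‖/‖b‖, by positivity, ?_⟩
  have fin : star x * (a * c) * z = star x * ((e * (‖a‖*‖c‖/‖b‖)) • b) * z := by
    have hy0 : (‖y‖^2 : ℝ) ≠ 0 := by positivity
    apply smul_right_injective _ hy0
    simp only
    rw [← prod, prod2]
    have : star x * ((e * (‖a‖*‖c‖/‖b‖)) • b) * z = (‖a‖*‖c‖/‖b‖) • (star x * (e • b) * z) := by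
      rw [mul_comm e, mul_smul]; simp only [smul_mul_assoc, mul_smul_comm]
    rw [this, ← hT2', Quaternion.smul_coe, Quaternion.smul_coe]
    congr 1
    field_simp
  exact mul_left_cancel₀ hx (mul_right_cancel₀ hz fin)

theorem attain {a b c : ℍ[ℝ]} (ha : a ≠ 0) (hb : b ≠ 0) (hc : c ≠ 0) {p1 p2 p3 : ℝ}
    (h1 : 0 ≤ p1) (h2 : 0 ≤ p2) (h3 : 0 ≤ p3) (hp : p1^2+p2^2+p3^2 = 1) :
    ∃ w x y z : ℍ[ℝ], ‖w‖ = 1 ∧ ‖x‖^2 + ‖y‖^2 + ‖z‖^2 = 1 ∧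
      (‖a‖*p1*p2 + ‖b‖*p1*p3 + ‖c‖*p2*p3) • w =
        star x * a * y + star x * b * z + star y * c * z := by
  have ha' := norm_pos_iff.2 ha
  have hb' := norm_pos_iff.2 hb
  have hc' := norm_pos_iff.2 hc
  obtain ⟨w, hw⟩ : ∃ w, w = (1/(‖a‖*‖b‖*‖c‖)) • (a * c * star b) := ⟨_, rfl⟩
  have hwn : ‖w‖ = 1 := by
    rw [hw, norm_smul]; simp only [norm_mul, Quaternion.norm_star, Real.norm_eq_abs]
    rw [abs_of_pos (by positivity)]; field_simp
  have hacb : a * c * star b = (‖a‖*‖b‖*‖c‖) • w := by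
    rw [hw, smul_smul]
    rw [mul_one_div_cancel (by positivity), one_smul]
  have hss : ∀ q : ℍ[ℝ], q * star q = ((‖q‖^2 : ℝ) : ℍ[ℝ]) := fun q => by
    rw [Quaternion.self_mul_star, Quaternion.normSq_eq_norm_mul_self, sq]
  have hww : star w * w = 1 := by
    rw [Quaternion.star_mul_self, Quaternion.normSq_eq_norm_mul_self, hwn]; simp
  refine ⟨w, p1 • 1, (p2/‖a‖) • (star a * w), (p3/‖b‖) • (star b * w), hwn, ?_, ?_⟩
  · simp only [norm_smul, norm_mul, Quaternion.norm_star, hwn, Real.norm_eq_abs, abs_of_nonneg h1,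
      abs_of_nonneg (div_nonneg h2 ha'.le), abs_of_nonneg (div_nonneg h3 hb'.le), norm_one]
    field_simp
    linarith
  · have t1 : star (p1 • (1 : ℍ[ℝ])) * a * ((p2/‖a‖) • (star a * w)) = (‖a‖*p1*p2) • w := by
      simp only [Quaternion.star_smul, star_one, smul_mul_assoc, mul_smul_comm, one_mul]
      rw [← mul_assoc, hss, Quaternion.coe_mul_eq_smul, smul_smul, smul_smul]
      congr 1; field_simp
    have t2 : star (p1 • (1 : ℍ[ℝ])) * b * ((p3/‖b‖) • (star b * w)) = (‖b‖*p1*p3) • w := by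
      simp only [Quaternion.star_smul, star_one, smul_mul_assoc, mul_smul_comm, one_mul]
      rw [← mul_assoc, hss, Quaternion.coe_mul_eq_smul, smul_smul, smul_smul]
      congr 1; field_simp
    have t3 : star ((p2/‖a‖) • (star a * w)) * c * ((p3/‖b‖) • (star b * w)) = (‖c‖*p2*p3) • w := by
      simp only [Quaternion.star_smul, smul_mul_assoc, mul_smul_comm, star_mul, star_star]
      have : star w * a * c * (star b * w) = star w * (a * c * star b) * w := by noncomm_ring
      rw [this, hacb]
      simp only [smul_mul_assoc, mul_smul_comm, smul_smul, hww, one_mul]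
      congr 1; field_simp
    rw [t1, t2, t3, ← add_smul, ← add_smul]

theorem not_ball (A : Matrix (Fin 3) (Fin 3) (Quaternion ℝ))
    (hupper : ∀ i j, j ≤ i → A i j = 0) (ha : A 0 1 ≠ 0) (hb : A 0 2 ≠ 0) (hc : A 1 2 ≠ 0)
    (r : ℝ) (h : qnr A = Metric.closedBall (0 : Quaternion ℝ) r) : False := by
  have ha' := norm_pos_iff.2 ha
  have hb' := norm_pos_iff.2 hb
  have hc' := norm_pos_iff.2 hc
  obtain ⟨x, y, z, hx, hy, hz, h1, hm⟩ := real_max ‖A 0 1‖ ‖A 0 2‖ ‖A 1 2‖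
  obtain ⟨w, X, Y, Z, hw, hX, hW⟩ := attain ha hb hc hx hy hz h1
  set m := ‖A 0 1‖ * x * y + ‖A 0 2‖ * x * z + ‖A 1 2‖ * y * z with hmdef
  have hm0 : 0 ≤ m := by positivity
  have hmem : m • w ∈ qnr A := (mem_qnr_iff A hupper _).2 ⟨X, Y, Z, hX, hW⟩
  rw [h, mem_closedBall_zero_iff, norm_smul, hw, mul_one, Real.norm_eq_abs, abs_of_nonneg hm0] at hmem
  have key : ∀ e : ℝ, e = 1 ∨ e = -1 → ∃ κ : ℝ, 0 < κ ∧ A 0 1 * A 1 2 = (e * κ) • A 0 2 := by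
    intro e he
    have : ((e * m : ℝ) : ℍ[ℝ]) ∈ qnr A := by
      rw [h, mem_closedBall_zero_iff, Quaternion.norm_coe, Real.norm_eq_abs, abs_mul, abs_of_nonneg hm0]
      rcases he with rfl | rfl <;> simpa using hmem
    obtain ⟨X, Y, Z, hX, hW⟩ := (mem_qnr_iff A hupper _).1 this
    exact aligned he ha hb hc hm hX hW
  obtain ⟨k, hk, h2⟩ := key 1 (Or.inl rfl)
  obtain ⟨l, hl, h3⟩ := key (-1) (Or.inr rfl)
  rw [h2] at h3
  have := smul_left_injective ℝ hb h3
  linarith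

theorem real_bound {a b c u v w : ℝ} (h : a = 0 ∨ b = 0 ∨ c = 0) (h1 : u^2+v^2+w^2=1) :
    a*u*v + b*u*w + c*v*w ≤ √(a^2+b^2+c^2)/2 := by
  rw [le_div_iff₀ two_pos]
  apply Real.le_sqrt_of_sq_le
  have gen : ∀ a b u v w : ℝ, u^2+v^2+w^2 = 1 → (u*(a*v+b*w)*2)^2 ≤ a^2+b^2 := by
    intro a b u v w h
    have e1 : (a*v+b*w)^2 ≤ (a^2+b^2)*(v^2+w^2) := by nlinarith [sq_nonneg (a*w-b*v)]
    have e2 : v^2+w^2 = 1-u^2 := by linarith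
    rw [e2] at e1
    have e3 : u^2*(1-u^2)*4 ≤ 1 := by nlinarith [sq_nonneg (2*u^2-1)]
    have e4 := mul_le_mul_of_nonneg_left e1 (sq_nonneg u)
    have e5 := mul_le_mul_of_nonneg_left e3 (by positivity : 0 ≤ a^2+b^2)
    nlinarith
  rcases h with rfl | rfl | rfl
  · have := gen b c w u v (by linarith); nlinarith
  · have := gen a c v u w (by linarith); nlinarith
  · have := gen a b u v w (by linarith); nlinarith

theorem exists_sk {m : ℝ} (h0 : 0 ≤ m) (h : m ≤ 1/2) : ∃ s k : ℝ, s^2+k^2 = 1 ∧ s*k = m := by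
  have e1 := Real.sq_sqrt (show 0 ≤ 1+2*m by linarith)
  have e2 := Real.sq_sqrt (show 0 ≤ 1-2*m by linarith)
  exact ⟨(√(1+2*m)+√(1-2*m))/2, (√(1+2*m)-√(1-2*m))/2, by nlinarith, by nlinarith⟩

theorem is_ball (A : Matrix (Fin 3) (Fin 3) (Quaternion ℝ))
    (hupper : ∀ i j, j ≤ i → A i j = 0) (h : A 0 1 = 0 ∨ A 0 2 = 0 ∨ A 1 2 = 0) :
    qnr A = Metric.closedBall (0 : Quaternion ℝ) (√(‖A 0 1‖^2+‖A 0 2‖^2+‖A 1 2‖^2)/2) := by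
  ext q
  rw [mem_qnr_iff A hupper, mem_closedBall_zero_iff]
  generalize A 0 1 = a at *
  generalize A 0 2 = b at *
  generalize A 1 2 = c at *
  constructor
  · rintro ⟨x, y, z, h1, rfl⟩
    refine (norm_form_le _ _ _ _ _ _).trans (real_bound ?_ h1)
    simpa using h
  · intro hq
    have hss : ∀ q : ℍ[ℝ], q * star q = ((‖q‖^2 : ℝ) : ℍ[ℝ]) := fun q => by
      rw [Quaternion.self_mul_star, Quaternion.normSq_eq_norm_mul_self, sq]
    obtain ⟨R, hR⟩ : ∃ R, R = √(‖a‖^2+‖b‖^2+‖c‖^2) := ⟨_, rfl⟩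
    have hR2 : R^2 = ‖a‖^2+‖b‖^2+‖c‖^2 := by rw [hR, Real.sq_sqrt (by positivity)]
    rw [← hR] at hq
    have hR0 : 0 ≤ R := by rw [hR]; positivity
    rcases hR0.eq_or_lt with h0 | h0
    · rw [← h0] at hq
      have hq0 : q = 0 := by
        rw [← norm_le_zero_iff]; linarith
      exact ⟨1, 0, 0, by simp, by simp [hq0]⟩
    · obtain ⟨s, k, hsk, hm⟩ := exists_sk (m := ‖q‖/R) (by positivity) (by
        rw [div_le_iff₀ h0]; linarith)
      obtain ⟨u, hu, hqu⟩ : ∃ u : ℍ[ℝ], ‖u‖ = 1 ∧ q = ‖q‖ • u := by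
        by_cases hq0 : q = 0
        · exact ⟨1, by simp, by simp [hq0]⟩
        · have := norm_pos_iff.2 hq0
          refine ⟨‖q‖⁻¹ • q, ?_, ?_⟩
          · rw [norm_smul, norm_inv, norm_norm]; field_simp
          · rw [smul_smul, mul_inv_cancel₀ this.ne', one_smul]
      have hmq : s * k * R = ‖q‖ := by rw [hm]; field_simp
      rw [← hmq] at hqu
      have hsc : ∀ t : ℝ, t = R^2 → (s * (k/R)) * t = s*k*R := by
        rintro t rfl; field_simp
      rcases h with rfl | rfl | rfl
      · simp only [norm_zero] at hR2
        refine ⟨(k/R) • (b * star u), (k/R) • (c * star u), s • 1, ?_, ?_⟩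
        · simp only [norm_smul, norm_mul, Quaternion.norm_star, hu, Real.norm_eq_abs, norm_one, mul_pow, sq_abs,
            div_pow]
          rw [hR2]
          have : (0:ℝ) < 0^2 + ‖b‖^2+‖c‖^2 := by rw [← hR2]; positivity
          field_simp
          nlinarith
        · simp only [Quaternion.star_smul, star_mul, star_star, smul_mul_assoc, mul_smul_comm,
            mul_one, mul_zero, zero_mul, smul_zero, zero_add, add_zero, zero_add, mul_assoc]
          have hs' : ∀ q : ℍ[ℝ], star q * q = ((‖q‖^2 : ℝ) : ℍ[ℝ]) := fun q => by
            rw [Quaternion.star_mul_self, Quaternion.normSq_eq_norm_mul_self, sq]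
          simp only [hs', Quaternion.mul_coe_eq_smul, smul_smul, ← add_smul]
          rw [hqu]
          congr 1
          rw [← hsc _ hR2.symm]; ring
      · simp only [norm_zero] at hR2
        refine ⟨(k/R) • (a * star u), s • 1, (k/R) • (star c * u), ?_, ?_⟩
        · simp only [norm_smul, norm_mul, Quaternion.norm_star, hu, Real.norm_eq_abs, norm_one, mul_pow, sq_abs,
            div_pow]
          rw [hR2]
          have : (0:ℝ) < ‖a‖^2+0^2+‖c‖^2 := by rw [← hR2]; positivity
          field_simp
          nlinarith
        · have hs' : ∀ q : ℍ[ℝ], star q * q = ((‖q‖^2 : ℝ) : ℍ[ℝ]) := fun q => by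
            rw [Quaternion.star_mul_self, Quaternion.normSq_eq_norm_mul_self, sq]
          have e1 : c * (star c * u) = ‖c‖^2 • u := by
            rw [← mul_assoc, hss, Quaternion.coe_mul_eq_smul]
          simp only [Quaternion.star_smul, star_mul, star_star, star_one, smul_mul_assoc,
            mul_smul_comm, mul_one, one_mul, mul_zero, zero_mul, smul_zero, zero_add, add_zero, add_zero, mul_assoc, e1]
          simp only [hs', Quaternion.mul_coe_eq_smul, smul_smul, ← add_smul]
          rw [hqu]
          congr 1
          rw [← hsc _ hR2.symm]; ring
      · simp only [norm_zero] at hR2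
        refine ⟨s • 1, (k/R) • (star a * u), (k/R) • (star b * u), ?_, ?_⟩
        · simp only [norm_smul, norm_mul, Quaternion.norm_star, hu, Real.norm_eq_abs, norm_one, mul_pow, sq_abs,
            div_pow]
          rw [hR2]
          have : (0:ℝ) < ‖a‖^2+‖b‖^2+0^2 := by rw [← hR2]; positivity
          field_simp
          nlinarith
        · have e1 : ∀ c : ℍ[ℝ], c * (star c * u) = ‖c‖^2 • u := fun c => by
            rw [← mul_assoc, hss, Quaternion.coe_mul_eq_smul]
          simp only [Quaternion.star_smul, star_one, smul_mul_assoc,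
            mul_smul_comm, one_mul, mul_zero, zero_mul, smul_zero, zero_add, add_zero, add_zero, e1]
          simp only [smul_smul, ← add_smul]
          rw [hqu]
          congr 1
          rw [← hsc _ hR2.symm]; ring

theorem qnr_3x3_disk_iff_cycle_free (A : Matrix (Fin 3) (Fin 3) (Quaternion ℝ))
    (hupper : ∀ i j, j ≤ i → A i j = 0) :
    ((∃ r : ℝ, 0 ≤ r ∧ qnr A = Metric.closedBall (0 : Quaternion ℝ) r) ↔
      (graphOf A).IsAcyclic) ∧
    ((graphOf A).IsAcyclic ↔ A 0 1 * A 0 2 * A 1 2 = 0) := by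
  refine ⟨?_, graph_acyclic_iff A hupper⟩
  rw [graph_acyclic_iff A hupper]
  constructor
  · rintro ⟨r, -, h⟩
    by_contra hne
    simp only [mul_eq_zero, not_or] at hne
    exact not_ball A hupper hne.1.1 hne.1.2 hne.2 r h
  · intro h
    simp only [mul_eq_zero, or_assoc] at h
    exact ⟨_, by positivity, is_ball A hupper h⟩
end

section
/- Let A ∈ M₃(ℍ) be strictly upper triangular with entries a₁₂, a₁₃, a₂₃ above the diagonal, and suppose the two quaternions a₁₂ and a₁₃a₂₃* are ℝ-linearly independent. Let y = (y₁,y₂,y₃) ∈ ℍ³ with |y₁|²+|y₂|²+|y₃|² = 1 be such that π_ℝ(y⋆Ay) ≥ π_ℝ(x⋆Ax) for all x ∈ ℍ³ with ∑ᵢ|xᵢ|² = 1. Then each of the three quaternions y₁*(a₁₂y₂ + a₁₃y₃), y₂*(a₁₂*y₁ + a₂₃y₃), and (y₁*a₁₃ + y₂*a₂₃)y₃ is a nonzero real number. -/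
open Quaternion in
lemma aux_eq_zero (m S : ℝ) (hm : 0 < m) (hS : 0 ≤ S)
    (h : ∀ t : ℝ, 0 ≤ t * S + t ^ 2 * (m * S)) : S = 0 := by
  have h1 := h (-1 / (m + 1))
  have hp : 0 < m + 1 := by linarith
  have : -1 / (m + 1) * S + (-1 / (m + 1)) ^ 2 * (m * S) = -(S / (m + 1) ^ 2) := by
    field_simp
    ring
  rw [this] at h1
  have h2 : S / (m + 1) ^ 2 = 0 := le_antisymm (by linarith) (by positivity)
  rcases div_eq_zero_iff.1 h2 with h3 | h3
  · exact h3
  · exact absurd h3 (by positivity)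

/-- Real quadratic form attached to a strictly upper triangular matrix. -/
noncomputable def auxForm (a b c x1 x2 x3 : Quaternion ℝ) : ℝ :=
  (star x1 * a * x2 + star x1 * b * x3 + star x2 * c * x3).re

open Quaternion in
lemma aux_lagrange (a b c y1 y2 y3 : Quaternion ℝ) (m : ℝ) (hm : 0 < m)
    (H : ∀ x1 x2 x3 : Quaternion ℝ,
      auxForm a b c x1 x2 x3 ≤ m * (normSq x1 + normSq x2 + normSq x3))
    (hy : auxForm a b c y1 y2 y3 = m * (normSq y1 + normSq y2 + normSq y3)) :
    a * y2 + b * y3 = (2 * m) • y1 ∧ star a * y1 + c * y3 = (2 * m) • y2 ∧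
      star b * y1 + star c * y2 = (2 * m) • y3 := by
  refine ⟨?_, ?_, ?_⟩
  · rw [← sub_eq_zero, ← neg_eq_zero, neg_sub, ← normSq_eq_zero]
    refine aux_eq_zero m _ hm normSq_nonneg fun t => ?_
    have h := H (y1 + t • ((2 * m) • y1 - (a * y2 + b * y3))) y2 y3
    refine (sub_nonneg.2 h).trans (le_of_eq ?_)
    rw [← add_zero (_ - _), ← sub_eq_zero.2 hy]
    simp [auxForm, normSq_def']
    ring
  · rw [← sub_eq_zero, ← neg_eq_zero, neg_sub, ← normSq_eq_zero]
    refine aux_eq_zero m _ hm normSq_nonneg fun t => ?_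
    have h := H y1 (y2 + t • ((2 * m) • y2 - (star a * y1 + c * y3))) y3
    refine (sub_nonneg.2 h).trans (le_of_eq ?_)
    rw [← add_zero (_ - _), ← sub_eq_zero.2 hy]
    simp [auxForm, normSq_def']
    ring
  · rw [← sub_eq_zero, ← neg_eq_zero, neg_sub, ← normSq_eq_zero]
    refine aux_eq_zero m _ hm normSq_nonneg fun t => ?_
    have h := H y1 y2 (y3 + t • ((2 * m) • y3 - (star b * y1 + star c * y2)))
    refine (sub_nonneg.2 h).trans (le_of_eq ?_)
    rw [← add_zero (_ - _), ← sub_eq_zero.2 hy]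
    simp [auxForm, normSq_def']
    ring

open Quaternion in
lemma aux_nonzero (a b c y1 y2 y3 : Quaternion ℝ) (μ : ℝ) (hμ : μ ≠ 0)
    (hli : ∀ s t : ℝ, s • a + t • (b * star c) = 0 → s = 0 ∧ t = 0)
    (hne : ¬ (y1 = 0 ∧ y2 = 0 ∧ y3 = 0))
    (e1 : a * y2 + b * y3 = μ • y1) (e2 : star a * y1 + c * y3 = μ • y2)
    (e3 : star b * y1 + star c * y2 = μ • y3) : y1 ≠ 0 ∧ y2 ≠ 0 ∧ y3 ≠ 0 := by
  refine ⟨?_, ?_, ?_⟩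
  · rintro rfl
    simp only [mul_zero, zero_add, smul_zero] at e1 e2 e3
    have h3 : y3 ≠ 0 := by
      rintro rfl
      rw [mul_zero, eq_comm, smul_eq_zero] at e2
      exact hne ⟨rfl, e2.resolve_left hμ, rfl⟩
    have h : (a * c + μ • b) * y3 = 0 := by
      have : (a * c + μ • b) * y3 = a * (c * y3) + μ • (b * y3) := by
        rw [add_mul, mul_assoc, smul_mul_assoc]
      rw [this, e2, mul_smul_comm, ← smul_add, e1, smul_zero]
    have h := (mul_eq_zero.1 h).resolve_right h3
    refine hμ (hli (normSq c) μ ?_).2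
    have h' : (a * c + μ • b) * star c = 0 := by rw [h, zero_mul]
    rw [← h', add_mul, mul_assoc, self_mul_star, mul_coe_eq_smul, smul_mul_assoc]
  · rintro rfl
    simp only [mul_zero, zero_add, add_zero, smul_zero] at e1 e2 e3
    have h3 : y3 ≠ 0 := by
      rintro rfl
      rw [mul_zero, eq_comm, smul_eq_zero] at e1
      exact hne ⟨e1.resolve_left hμ, rfl, rfl⟩
    have h : (star a * b + μ • c) * y3 = 0 := by
      have : (star a * b + μ • c) * y3 = star a * (b * y3) + μ • (c * y3) := by
        rw [add_mul, mul_assoc, smul_mul_assoc]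
      rw [this, e1, mul_smul_comm, ← smul_add, e2, smul_zero]
    have h := (mul_eq_zero.1 h).resolve_right h3
    refine hμ (hli (normSq b) μ ?_).2
    have h' : b * star (star a * b + μ • c) = 0 := by rw [h, star_zero, mul_zero]
    rw [← h', star_add, star_mul, star_star, mul_add, ← mul_assoc, self_mul_star,
      coe_mul_eq_smul, Quaternion.star_smul, mul_smul_comm]
  · rintro rfl
    simp only [mul_zero, zero_add, add_zero, smul_zero] at e1 e2 e3
    have h3 : y2 ≠ 0 := by
      rintro rfl
      rw [mul_zero, eq_comm, smul_eq_zero] at e1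
      exact hne ⟨e1.resolve_left hμ, rfl, rfl⟩
    have h : (star b * a + μ • star c) * y2 = 0 := by
      have : (star b * a + μ • star c) * y2 = star b * (a * y2) + μ • (star c * y2) := by
        rw [add_mul, mul_assoc, smul_mul_assoc]
      rw [this, e1, mul_smul_comm, ← smul_add, e3, smul_zero]
    have h := (mul_eq_zero.1 h).resolve_right h3
    refine hμ (hli (normSq b) μ ?_).2
    have h' : b * (star b * a + μ • star c) = 0 := by rw [h, mul_zero]
    rw [← h', mul_add, ← mul_assoc, self_mul_star, coe_mul_eq_smul, mul_smul_comm]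

open Quaternion in
lemma aux_final (q z : Quaternion ℝ) (μ : ℝ) (hμ : μ ≠ 0) (hq : q ≠ 0) (hz : z = μ • q) :
    (star q * z).im = 0 ∧ star q * z ≠ 0 := by
  subst hz
  have : star q * (μ • q) = ((μ * normSq q : ℝ) : Quaternion ℝ) := by
    rw [mul_smul_comm, star_mul_self, coe_mul, coe_mul_eq_smul]
  refine ⟨by rw [this, im_coe], mul_ne_zero (star_ne_zero.2 hq) (smul_ne_zero hμ hq)⟩

/-- Let `A ∈ M₃(ℍ)` be strictly upper triangular with `a₁₂` and `a₁₃a₂₃*`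
`ℝ`-linearly independent, and let `y` be a unit vector maximizing the real part of
`x⋆Ax` over unit vectors `x`. Then `y₁*(a₁₂y₂ + a₁₃y₃)`, `y₂*(a₁₂*y₁ + a₂₃y₃)` and
`(y₁*a₁₃ + y₂*a₂₃)y₃` are all nonzero reals. -/
theorem maximizer_terms_real_nonzero (A : Matrix (Fin 3) (Fin 3) (Quaternion ℝ))
    (hupper : ∀ i j, j ≤ i → A i j = 0)
    (hli : LinearIndependent ℝ ![A 0 1, A 0 2 * star (A 1 2)])
    (y : Fin 3 → Quaternion ℝ) (hy : (∑ i, ‖y i‖ ^ 2) = 1)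
    (hmax : ∀ x : Fin 3 → Quaternion ℝ, (∑ i, ‖x i‖ ^ 2) = 1 →
      (∑ i, ∑ j, star (x i) * A i j * x j).re ≤ (∑ i, ∑ j, star (y i) * A i j * y j).re) :
    ((star (y 0) * (A 0 1 * y 1 + A 0 2 * y 2)).im = 0 ∧
      star (y 0) * (A 0 1 * y 1 + A 0 2 * y 2) ≠ 0) ∧
    ((star (y 1) * (star (A 0 1) * y 0 + A 1 2 * y 2)).im = 0 ∧
      star (y 1) * (star (A 0 1) * y 0 + A 1 2 * y 2) ≠ 0) ∧
    (((star (y 0) * A 0 2 + star (y 1) * A 1 2) * y 2).im = 0 ∧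
      (star (y 0) * A 0 2 + star (y 1) * A 1 2) * y 2 ≠ 0) := by
  have hform : ∀ x : Fin 3 → Quaternion ℝ, (∑ i, ∑ j, star (x i) * A i j * x j).re
      = auxForm (A 0 1) (A 0 2) (A 1 2) (x 0) (x 1) (x 2) := by
    intro x
    simp only [Fin.sum_univ_three]
    rw [hupper 0 0 (by decide), hupper 1 0 (by decide), hupper 1 1 (by decide),
      hupper 2 0 (by decide), hupper 2 1 (by decide), hupper 2 2 (by decide)]
    simp only [mul_zero, zero_mul, add_zero, zero_add, auxForm]
  have hnorm : ∀ x : Fin 3 → Quaternion ℝ, (∑ i, ‖x i‖ ^ 2)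
      = Quaternion.normSq (x 0) + Quaternion.normSq (x 1) + Quaternion.normSq (x 2) := by
    intro x
    simp only [Fin.sum_univ_three, Quaternion.normSq_eq_norm_mul_self, sq]
  simp only [hform, hnorm] at hmax hy
  generalize A 0 1 = a at *
  generalize A 0 2 = b at *
  generalize A 1 2 = c at *
  obtain ⟨m, hm⟩ : ∃ m, auxForm a b c (y 0) (y 1) (y 2) = m := ⟨_, rfl⟩
  rw [hm] at hmax
  have hli' : ∀ s t : ℝ, s • a + t • (b * star c) = 0 → s = 0 ∧ t = 0 :=
    LinearIndependent.pair_iff.1 hli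
  have H : ∀ x1 x2 x3 : Quaternion ℝ, auxForm a b c x1 x2 x3 ≤
      m * (Quaternion.normSq x1 + Quaternion.normSq x2 + Quaternion.normSq x3) := by
    intro x1 x2 x3
    have n1 := Quaternion.normSq_nonneg (a := x1)
    have n2 := Quaternion.normSq_nonneg (a := x2)
    have n3 := Quaternion.normSq_nonneg (a := x3)
    obtain ⟨N, hN⟩ : ∃ N, Quaternion.normSq x1 + Quaternion.normSq x2
      + Quaternion.normSq x3 = N := ⟨_, rfl⟩
    rw [hN]
    rcases (show 0 ≤ N by linarith).eq_or_lt with h0 | h0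
    · have z1 : x1 = 0 := Quaternion.normSq_eq_zero.1 (by linarith)
      have z2 : x2 = 0 := Quaternion.normSq_eq_zero.1 (by linarith)
      have z3 : x3 = 0 := Quaternion.normSq_eq_zero.1 (by linarith)
      subst z1 z2 z3
      simp [auxForm, ← h0]
      exact le_of_eq rfl
    · have hs : (√N)⁻¹ ^ 2 = N⁻¹ := by rw [inv_pow, Real.sq_sqrt h0.le]
      obtain ⟨s, hs'⟩ : ∃ s, (√N)⁻¹ = s := ⟨_, rfl⟩
      rw [hs'] at hs
      have h := hmax ![s • x1, s • x2, s • x3] (by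
        simp only [Matrix.cons_val, Quaternion.normSq_smul]
        rw [← mul_add, ← mul_add, hN, hs, inv_mul_cancel₀ h0.ne'])
      have e : auxForm a b c (s • x1) (s • x2) (s • x3) = s ^ 2 * auxForm a b c x1 x2 x3 := by
        simp [auxForm]
        ring
      simp only [Matrix.cons_val] at h
      rw [e, hs, inv_mul_le_iff₀ h0] at h
      linarith
  have ha : a ≠ 0 := by
    rintro rfl
    have := (hli' 1 0 (by simp)).1
    exact one_ne_zero this
  have hmpos : 0 < m := by
    have h := H a 1 0
    have e : auxForm a b c a 1 0 = Quaternion.normSq a := by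
      simp [auxForm, Quaternion.normSq_def']
      ring
    have hp : 0 < Quaternion.normSq a :=
      lt_of_le_of_ne Quaternion.normSq_nonneg (Quaternion.normSq_ne_zero.2 ha).symm
    rw [e] at h
    simp only [map_one, map_zero, add_zero] at h
    by_contra hneg
    nlinarith
  obtain ⟨e1, e2, e3⟩ := aux_lagrange a b c (y 0) (y 1) (y 2) m hmpos H (by rw [hm, hy, mul_one])
  have hμ : 2 * m ≠ 0 := by positivity
  obtain ⟨y0, y1, y2⟩ := aux_nonzero a b c (y 0) (y 1) (y 2) (2 * m) hμ hli' (by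
    rintro ⟨h1, h2, h3⟩
    rw [h1, h2, h3] at hy
    simp at hy) e1 e2 e3
  refine ⟨aux_final _ _ _ hμ y0 e1, aux_final _ _ _ hμ y1 e2, ?_⟩
  obtain ⟨f1, f2⟩ := aux_final _ _ _ hμ y2 e3
  have hst : (star (y 0) * b + star (y 1) * c) * y 2
      = star (star (y 2) * (star b * y 0 + star c * y 1)) := by simp [star_mul]
  rw [hst]
  exact ⟨by rw [Quaternion.im_star, f1, neg_zero], star_ne_zero.2 f2⟩
end

section
/- Let A ∈ M₃(ℍ) be strictly upper triangular (a_{ij} = 0 for i ≥ j), with entries a₁₂, a₁₃, a₂₃ above the diagonal. Then W(A) is a convex subset of ℍ if and only if a₁₃* a₁₂ a₂₃ is a real quaternion (its imaginary part vanishes). -/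
open Quaternion

/-- Quaternion with given components. -/
def qmk (r i j k : ℝ) : Quaternion ℝ := ⟨r, i, j, k⟩

@[simp] theorem qmk_re (r i j k : ℝ) : (qmk r i j k).re = r := rfl
@[simp] theorem qmk_imI (r i j k : ℝ) : (qmk r i j k).imI = i := rfl
@[simp] theorem qmk_imJ (r i j k : ℝ) : (qmk r i j k).imJ = j := rfl
@[simp] theorem qmk_imK (r i j k : ℝ) : (qmk r i j k).imK = k := rfl

/-- Numerical range in terms of the three entries. -/
def W3 (a b c : Quaternion ℝ) : Set (Quaternion ℝ) :=
  {q | ∃ x y z : Quaternion ℝ, normSq x + normSq y + normSq z = 1 ∧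
    q = star x * a * y + star x * b * z + star y * c * z}

theorem qnr_eq_W3 (A : Matrix (Fin 3) (Fin 3) (Quaternion ℝ))
    (hupper : ∀ i j, j ≤ i → A i j = 0) : qnr A = W3 (A 0 1) (A 0 2) (A 1 2) := by
  have h00 := hupper 0 0 (by decide)
  have h10 := hupper 1 0 (by decide)
  have h11 := hupper 1 1 (by decide)
  have h20 := hupper 2 0 (by decide)
  have h21 := hupper 2 1 (by decide)
  have h22 := hupper 2 2 (by decide)
  ext q
  simp only [qnr, W3, Set.mem_ofPred_eq, Fin.sum_univ_three, h00, h10, h11, h20, h21, h22,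
    normSq_eq_norm_mul_self, mul_zero, zero_mul, zero_add, add_zero, ← sq]
  constructor
  · rintro ⟨x, h, rfl⟩
    exact ⟨x 0, x 1, x 2, h, rfl⟩
  · rintro ⟨x, y, z, h, rfl⟩
    exact ⟨![x, y, z], h, rfl⟩

theorem star_mul_self_of_unit {u : Quaternion ℝ} (hu : normSq u = 1) : star u * u = 1 := by
  rw [star_mul_self, hu]; rfl

theorem self_mul_star_of_unit {u : Quaternion ℝ} (hu : normSq u = 1) : u * star u = 1 := by
  rw [self_mul_star, hu]; rfl

theorem W3_subset_diag {a b c u v w : Quaternion ℝ} (hu : normSq u = 1) (hv : normSq v = 1)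
    (hw : normSq w = 1) :
    W3 (star u * a * v) (star u * b * w) (star v * c * w) ⊆ W3 a b c := by
  rintro q ⟨x, y, z, h, rfl⟩
  refine ⟨u * x, v * y, w * z, by simp [hu, hv, hw, h], ?_⟩
  simp only [star_mul, mul_assoc]

theorem W3_diag {a b c u v w : Quaternion ℝ} (hu : normSq u = 1) (hv : normSq v = 1)
    (hw : normSq w = 1) :
    W3 (star u * a * v) (star u * b * w) (star v * c * w) = W3 a b c := by
  apply subset_antisymm (W3_subset_diag hu hv hw)
  have key : ∀ {u v : Quaternion ℝ} (a), normSq u = 1 → normSq v = 1 →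
      star (star u) * (star u * a * v) * star v = a := by
    intro u v a hu hv
    rw [star_star, mul_assoc, mul_assoc (star u * a), self_mul_star_of_unit hv, mul_one,
      ← mul_assoc, self_mul_star_of_unit hu, one_mul]
  have := W3_subset_diag (a := star u * a * v) (b := star u * b * w) (c := star v * c * w)
    (u := star u) (v := star v) (w := star w) (by simpa) (by simpa) (by simpa)
  rwa [key _ hu hv, key _ hu hw, key _ hv hw] at this

theorem exists_unit_of_ne {s v w : Quaternion ℝ} (hs : s ≠ 0) (h : v * s = s * w) :
    ∃ u : Quaternion ℝ, normSq u = 1 ∧ star u * v * u = w := by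
  have hn : normSq s ≠ 0 := normSq_ne_zero.2 hs
  have hp : 0 < normSq s := lt_of_le_of_ne normSq_nonneg (Ne.symm hn)
  refine ⟨(√(normSq s))⁻¹ • s, ?_, ?_⟩
  · rw [normSq_smul, inv_pow, Real.sq_sqrt hp.le, inv_mul_cancel₀ hn]
  · rw [Quaternion.star_smul, smul_mul_assoc, smul_mul_assoc, mul_smul_comm, smul_smul, mul_assoc, h,
      ← mul_assoc, star_mul_self, ← mul_inv, Real.mul_self_sqrt hp.le, coe_mul_eq_smul, smul_smul,
      inv_mul_cancel₀ hn, one_smul]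

theorem conj_exists {v w : Quaternion ℝ} (hv : v.re = 0) (hw : w.re = 0)
    (h : normSq v = normSq w) : ∃ u : Quaternion ℝ, normSq u = 1 ∧ star u * v * u = w := by
  rw [normSq_def', normSq_def'] at h
  by_cases hs : v + w = 0
  · have hw' : w = -v := by rw [eq_neg_iff_add_eq_zero, add_comm]; exact hs
    subst hw'
    by_cases h0 : v.imI = 0 ∧ v.imJ = 0
    · refine exists_unit_of_ne (s := qmk 0 1 0 0) (fun h => ?_) ?_
      · have := congrArg (fun q : Quaternion ℝ => q.imI) h; simp at this
      · ext <;> simp [hv, h0]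
    · refine exists_unit_of_ne (s := qmk 0 v.imJ (-v.imI) 0) (fun h => h0 ?_) ?_
      · have h1 := congrArg (fun q : Quaternion ℝ => q.imI) h
        have h2 := congrArg (fun q : Quaternion ℝ => q.imJ) h
        simp at h1 h2
        exact ⟨h2, h1⟩
      · ext <;> simp [hv] <;> ring
  · refine exists_unit_of_ne hs ?_
    ext <;> simp [hv, hw] at h ⊢ <;> linarith

theorem W3_rot {a b c q q' : Quaternion ℝ} (hq : q ∈ W3 a b c) (hre : q.re = q'.re)
    (him : normSq q.im = normSq q'.im) : q' ∈ W3 a b c := by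
  obtain ⟨u, hu, h⟩ := conj_exists (re_im q) (re_im q') him
  obtain ⟨x, y, z, hn, h1⟩ := hq
  refine ⟨x * u, y * u, z * u, by simp [hu, hn], ?_⟩
  have : q' = star u * q * u := by
    rw [← re_add_im q, ← re_add_im q', ← h, hre, mul_add, add_mul, mul_assoc (star u) (q'.re : Quaternion ℝ),
      coe_commutes, ← mul_assoc, star_mul_self_of_unit hu, one_mul]
  rw [this, h1]
  simp only [star_mul, mul_add, add_mul, mul_assoc]

theorem phase (a : Quaternion ℝ) : ∃ u : Quaternion ℝ, normSq u = 1 ∧ ∃ r : ℝ, star u * a = (r : Quaternion ℝ) ∧ r * r = normSq a := by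
  by_cases h : a = 0
  · exact ⟨1, by simp, 0, by simp [h], by simp [h]⟩
  · have hn : ‖a‖ ≠ 0 := norm_ne_zero_iff.2 h
    refine ⟨‖a‖⁻¹ • a, ?_, ‖a‖, ?_, ?_⟩
    · rw [normSq_smul, normSq_eq_norm_mul_self]; field_simp
    · rw [Quaternion.star_smul, smul_mul_assoc, star_mul_self, normSq_eq_norm_mul_self, smul_coe]
      congr 1; field_simp
    · rw [normSq_eq_norm_mul_self]

theorem phase' (a : Quaternion ℝ) : ∃ u : Quaternion ℝ, normSq u = 1 ∧ ∃ r : ℝ, a * u = (r : Quaternion ℝ) ∧ r * r = normSq a := by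
  obtain ⟨u, hu, r, h, hr⟩ := phase (star a)
  refine ⟨u, hu, r, ?_, by simpa using hr⟩
  have := congrArg star h
  simpa using this

/-- The sesquilinear expression. -/
noncomputable def val (a : ℝ) (b : Quaternion ℝ) (c : ℝ) (x y z : Quaternion ℝ) : Quaternion ℝ :=
  star x * (a : Quaternion ℝ) * y + star x * b * z + star y * (c : Quaternion ℝ) * z

theorem eq_zero_of_quad {n l : ℝ} (hn : 0 ≤ n) (h : ∀ t : ℝ, 0 ≤ t * n + t ^ 2 * (l * n)) :
    n = 0 := by
  by_contra h0
  have hp : 0 < n := lt_of_le_of_ne hn (Ne.symm h0)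
  have h1 := h (-(1 / (|l| + 1)))
  have h2 : 0 < |l| + 1 := by positivity
  have h3 : -(1 / (|l| + 1)) * n + (-(1 / (|l| + 1))) ^ 2 * (l * n)
      = (n / (|l| + 1) ^ 2) * (l - (|l| + 1)) := by field_simp; ring
  rw [h3] at h1
  have h4 : 0 < n / (|l| + 1) ^ 2 := by positivity
  have h5 : l - (|l| + 1) < 0 := by linarith [le_abs_self l]
  nlinarith

theorem eigen_of_max {a c l : ℝ} {b x y z : Quaternion ℝ}
    (hF : ∀ x y z, (val a b c x y z).re ≤ l * (normSq x + normSq y + normSq z))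
    (h0 : (val a b c x y z).re = l * (normSq x + normSq y + normSq z)) :
    a • y + b * z = (2 * l) • x ∧ a • x + c • z = (2 * l) • y ∧
      star b * x + c • y = (2 * l) • z := by
  refine ⟨?_, ?_, ?_⟩
  · rw [eq_comm, ← sub_eq_zero, ← normSq_eq_zero]
    set p := (2 * l) • x - (a • y + b * z) with hp
    refine eq_zero_of_quad (l := l) normSq_nonneg (fun t => ?_)
    have h1 := hF (x + t • p) y z
    have : l * (normSq (x + t • p) + normSq y + normSq z) - (val a b c (x + t • p) y z).re
      = l * (normSq x + normSq y + normSq z) - (val a b c x y z).re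
        + (t * normSq p + t ^ 2 * (l * normSq p)) := by
      rw [hp]; simp [val, normSq_def']; ring
    linarith
  · rw [eq_comm, ← sub_eq_zero, ← normSq_eq_zero]
    set p := (2 * l) • y - (a • x + c • z) with hp
    refine eq_zero_of_quad (l := l) normSq_nonneg (fun t => ?_)
    have h1 := hF x (y + t • p) z
    have : l * (normSq x + normSq (y + t • p) + normSq z) - (val a b c x (y + t • p) z).re
      = l * (normSq x + normSq y + normSq z) - (val a b c x y z).re
        + (t * normSq p + t ^ 2 * (l * normSq p)) := by
      rw [hp]; simp [val, normSq_def']; ring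
    linarith
  · rw [eq_comm, ← sub_eq_zero, ← normSq_eq_zero]
    set p := (2 * l) • z - (star b * x + c • y) with hp
    refine eq_zero_of_quad (l := l) normSq_nonneg (fun t => ?_)
    have h1 := hF x y (z + t • p)
    have : l * (normSq x + normSq y + normSq (z + t • p)) - (val a b c x y (z + t • p)).re
      = l * (normSq x + normSq y + normSq z) - (val a b c x y z).re
        + (t * normSq p + t ^ 2 * (l * normSq p)) := by
      rw [hp]; simp [val, normSq_def']; ring
    linarith

theorem real_of_eig {b y : Quaternion ℝ} {r s : ℝ} (hr : r ≠ 0) (hy : y ≠ 0)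
    (h : r • (b * y) = s • y) : b.im = 0 := by
  have h1 : b * y = ((r⁻¹ * s : ℝ) : Quaternion ℝ) * y := by
    rw [coe_mul_eq_smul, mul_smul, ← h, smul_smul, inv_mul_cancel₀ hr, one_smul]
  rw [mul_right_cancel₀ hy h1, im_coe]

theorem smul_of_im {y z : Quaternion ℝ} (hy : y ≠ 0) (h : (star y * z).im = 0) :
    ∃ r : ℝ, z = r • y := by
  have hn := normSq_ne_zero.2 hy
  refine ⟨(normSq y)⁻¹ * (star y * z).re, ?_⟩
  have h1 : star y * z = ((star y * z).re : Quaternion ℝ) := by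
    conv_lhs => rw [← re_add_im (star y * z), h, add_zero]
  have h2 : y * (star y * z) = normSq y • z := by
    rw [← mul_assoc, self_mul_star, coe_mul_eq_smul]
  rw [mul_smul, ← mul_coe_eq_smul (star y * z).re, ← h1, h2, smul_smul, inv_mul_cancel₀ hn, one_smul]

theorem no_real_eig {a c l : ℝ} {b x y z : Quaternion ℝ} (ha : a ≠ 0) (hc : c ≠ 0)
    (hb : b.im ≠ 0)
    (h1 : a • y + b * z = (2 * l) • x) (h2 : a • x + c • z = (2 * l) • y)
    (h3 : star b * x + c • y = (2 * l) • z) (hv : (val a b c x y z).im = 0) :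
    x = 0 ∧ y = 0 ∧ z = 0 := by
  have hb' : (star b).im ≠ 0 := by simpa using hb
  by_cases hy : y = 0
  · subst hy
    have hz : z = (-(a / c)) • x := by
      have : c • z = (-a) • x := by
        rw [neg_smul, eq_neg_iff_add_eq_zero, add_comm, h2, smul_zero]
      rw [← inv_smul_smul₀ hc z, this, smul_smul]; congr 1; field_simp
    by_cases hx : x = 0
    · exact ⟨hx, rfl, by rw [hz, hx, smul_zero]⟩
    · exfalso
      refine hb (real_of_eig (r := -(a/c)) (s := 2 * l) (y := x) (by simp [ha, hc]) hx ?_)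
      rw [← h1, hz, mul_smul_comm, smul_zero, zero_add]
  · exfalso
    have e1 : val a b c x y z = (2 * l) • (star x * x) + c • (star y * z) := by
      rw [← mul_smul_comm, ← h1, val]
      simp only [mul_add, mul_coe_eq_smul, smul_mul_assoc, mul_smul_comm, mul_assoc]
    have i1 : (star y * z).im = 0 := by
      rw [e1, star_mul_self] at hv
      simpa [hc] using hv
    have i2 : (star y * x).im = 0 := by
      have := congrArg (fun q => (star y * q).im) h2
      simp only [mul_add, mul_smul_comm, star_mul_self] at this
      simpa [ha, i1] using this
    obtain ⟨r, rfl⟩ := smul_of_im hy i1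
    obtain ⟨s, rfl⟩ := smul_of_im hy i2
    by_cases hr : r = 0
    · subst hr
      by_cases hs : s = 0
      · subst hs
        simp [hc, hy] at h3
      · refine hb' (real_of_eig (r := s) (s := -c) (y := y) hs hy ?_)
        rw [neg_smul, eq_neg_iff_add_eq_zero, ← mul_smul_comm, h3, zero_smul, smul_zero]
    · refine hb (real_of_eig (r := r) (s := 2 * l * s - a) (y := y) hr hy ?_)
      rw [sub_smul, mul_smul, ← h1, mul_smul_comm]; abel

theorem W3_half {a c l : ℝ} {b q : Quaternion ℝ} (hl : q.re = l)
    (hq : q ∈ W3 (a : Quaternion ℝ) b (c : Quaternion ℝ))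
    (hconv : Convex ℝ (W3 (a : Quaternion ℝ) b (c : Quaternion ℝ))) :
    ∃ x y z : Quaternion ℝ, normSq x + normSq y + normSq z = 1 ∧
      val a b c x y z = (l : Quaternion ℝ) := by
  have hq' : star q ∈ W3 (a : Quaternion ℝ) b (c : Quaternion ℝ) :=
    W3_rot hq (by simp) (by simp)
  have hmid := hconv hq hq' (a := 1/2) (b := 1/2) (by norm_num) (by norm_num) (by norm_num)
  obtain ⟨x', y', z', hn, he⟩ := hmid
  refine ⟨x', y', z', hn, ?_⟩
  rw [val, ← he, ← smul_add, self_add_star', hl, smul_coe]; congr 1; ring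

theorem W3_not_convex {a c : ℝ} {b : Quaternion ℝ} (ha : a ≠ 0) (hc : c ≠ 0)
    (hb : b.im ≠ 0) : ¬ Convex ℝ (W3 (a : Quaternion ℝ) b (c : Quaternion ℝ)) := by
  intro hconv
  have : ProperSpace (Quaternion ℝ) := FiniteDimensional.proper_real _
  let S : Set (Quaternion ℝ × Quaternion ℝ × Quaternion ℝ) :=
    {p | normSq p.1 + normSq p.2.1 + normSq p.2.2 = 1}
  have hSc : IsClosed S := by
    apply isClosed_eq _ continuous_const
    exact ((continuous_normSq.comp continuous_fst).add
      (continuous_normSq.comp (continuous_fst.comp continuous_snd))).add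
      (continuous_normSq.comp (continuous_snd.comp continuous_snd))
  have hSb : Bornology.IsBounded S := by
    refine (Metric.isBounded_closedBall (x := 0) (r := 1)).subset ?_
    rintro ⟨x, y, z⟩ h
    change normSq x + normSq y + normSq z = 1 at h
    simp only [normSq_eq_norm_mul_self] at h
    rw [mem_closedBall_zero_iff, Prod.norm_mk, Prod.norm_mk]
    refine max_le ?_ (max_le ?_ ?_) <;>
      nlinarith [norm_nonneg x, norm_nonneg y, norm_nonneg z]
  have hS : IsCompact S := Metric.isCompact_of_isClosed_isBounded hSc hSb
  have hne : S.Nonempty := ⟨(1, 0, 0), by simp [S]⟩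
  have hcont : Continuous fun p : Quaternion ℝ × Quaternion ℝ × Quaternion ℝ =>
      (val a b c p.1 p.2.1 p.2.2).re := by
    unfold val
    apply continuous_re.comp
    fun_prop
  obtain ⟨⟨x, y, z⟩, hx, hmax⟩ := hS.exists_isMaxOn hne hcont.continuousOn
  change normSq x + normSq y + normSq z = 1 at hx
  have hmax' : ∀ x' y' z' : Quaternion ℝ, normSq x' + normSq y' + normSq z' = 1 →
      (val a b c x' y' z').re ≤ (val a b c x y z).re :=
    fun x' y' z' h => isMaxOn_iff.1 hmax (x', y', z') h
  clear hmax hcont hne hS hSb hSc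
  obtain ⟨l, hl⟩ : ∃ l, l = (val a b c x y z).re := ⟨_, rfl⟩
  rw [← hl] at hmax'
  have hF : ∀ x y z, (val a b c x y z).re ≤ l * (normSq x + normSq y + normSq z) := by
    intro x' y' z'
    set N := normSq x' + normSq y' + normSq z' with hN
    have p1 : 0 ≤ normSq x' := normSq_nonneg
    have p2 : 0 ≤ normSq y' := normSq_nonneg
    have p3 : 0 ≤ normSq z' := normSq_nonneg
    by_cases hN0 : N = 0
    · have q1 : x' = 0 := normSq_eq_zero.1 (by linarith)
      have q2 : y' = 0 := normSq_eq_zero.1 (by linarith)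
      have q3 : z' = 0 := normSq_eq_zero.1 (by linarith)
      simp [q1, q2, q3, val, hN0]
    · have hNp : 0 < N := lt_of_le_of_ne (by positivity) (Ne.symm hN0)
      set t := (√N)⁻¹ with ht
      have ht2 : t ^ 2 = N⁻¹ := by rw [ht, inv_pow, Real.sq_sqrt hNp.le]
      have hm : normSq (t • x') + normSq (t • y') + normSq (t • z') = 1 := by
        rw [normSq_smul, normSq_smul, normSq_smul, ← mul_add, ← mul_add, ← hN, ht2,
          inv_mul_cancel₀ hN0]
      have h1 : (val a b c (t • x') (t • y') (t • z')).re ≤ l := hmax' _ _ _ hm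
      have h2 : (val a b c (t • x') (t • y') (t • z')).re = t ^ 2 * (val a b c x' y' z').re := by
        simp [val]; ring
      rw [h2, ht2, inv_mul_le_iff₀ hNp] at h1
      linarith
  have hq : val a b c x y z ∈ W3 (a : Quaternion ℝ) b (c : Quaternion ℝ) := by
    refine ⟨x, y, z, hx, ?_⟩
    rw [val]
  obtain ⟨x', y', z', hn, he'⟩ := W3_half hl.symm hq hconv
  obtain ⟨e1, e2, e3⟩ := eigen_of_max (x := x') (y := y') (z := z') hF
    (by rw [he', hn, mul_one, re_coe])
  obtain ⟨rfl, rfl, rfl⟩ := no_real_eig ha hc hb e1 e2 e3 (by rw [he', im_coe])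
  simp at hn

theorem gram_comb (x y z x' y' z' : Quaternion ℝ) {t : ℝ} (h0 : 0 ≤ t) (h1 : t ≤ 1) :
    ∃ X Y Z : Quaternion ℝ,
      normSq X = (1 - t) * normSq x + t * normSq x' ∧
      normSq Y = (1 - t) * normSq y + t * normSq y' ∧
      normSq Z = (1 - t) * normSq z + t * normSq z' ∧
      (star X * Y).re = (1 - t) * (star x * y).re + t * (star x' * y').re ∧
      (star X * Z).re = (1 - t) * (star x * z).re + t * (star x' * z').re ∧
      (star Y * Z).re = (1 - t) * (star y * z).re + t * (star y' * z').re := by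
  let M : Quaternion ℝ → Quaternion ℝ → Quaternion ℝ → Matrix (Fin 4) (Fin 3) ℝ := fun x y z =>
    !![x.re, y.re, z.re; x.imI, y.imI, z.imI; x.imJ, y.imJ, z.imJ; x.imK, y.imK, z.imK]
  have hP : ((1 - t) • ((M x y z).conjTranspose * M x y z)
      + t • ((M x' y' z').conjTranspose * M x' y' z')).PosSemidef :=
    ((Matrix.posSemidef_conjTranspose_mul_self _).smul (by linarith)).add
      ((Matrix.posSemidef_conjTranspose_mul_self _).smul h0)
  obtain ⟨B, hB⟩ : ∃ B : Matrix (Fin 3) (Fin 3) ℝ,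
      (1 - t) • ((M x y z).conjTranspose * M x y z)
      + t • ((M x' y' z').conjTranspose * M x' y' z') = B.conjTranspose * B := by
    open scoped MatrixOrder Matrix.Norms.L2Operator in
    exact CStarAlgebra.nonneg_iff_eq_star_mul_self.mp hP.nonneg
  have e := fun i j => congrFun (congrFun hB i) j
  have e00 := e 0 0
  have e11 := e 1 1
  have e22 := e 2 2
  have e01 := e 0 1
  have e02 := e 0 2
  have e12 := e 1 2
  simp [M, Matrix.mul_apply, Fin.sum_univ_three, Fin.sum_univ_four] at e00 e11 e22 e01 e02 e12
  refine ⟨qmk (B 0 0) (B 1 0) (B 2 0) 0, qmk (B 0 1) (B 1 1) (B 2 1) 0,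
    qmk (B 0 2) (B 1 2) (B 2 2) 0, ?_, ?_, ?_, ?_, ?_, ?_⟩ <;> simp [normSq_def'] <;> linarith

theorem mixed_disc {p1 r1 s1 g1 p2 r2 s2 g2 t : ℝ} (hp1 : 0 ≤ p1) (hr1 : 0 ≤ r1)
    (hp2 : 0 ≤ p2) (hr2 : 0 ≤ r2) (h1 : g1 ^ 2 = p1 * r1 - s1 ^ 2) (h2 : g2 ^ 2 = p2 * r2 - s2 ^ 2)
    (ht0 : 0 ≤ t) (ht1 : t ≤ 1) :
    ((1 - t) * g1 + t * g2) ^ 2 ≤ ((1 - t) * p1 + t * p2) * ((1 - t) * r1 + t * r2)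
      - ((1 - t) * s1 + t * s2) ^ 2 := by
  have key : 2 * (g1 * g2 + s1 * s2) ≤ p1 * r2 + p2 * r1 := by
    refine le_of_sq_le_sq ?_ ?_
    · have e : (p1 * r1) * (p2 * r2) = (g1 ^ 2 + s1 ^ 2) * (g2 ^ 2 + s2 ^ 2) := by
        rw [h1, h2]; ring
      nlinarith [sq_nonneg (p1 * r2 - p2 * r1), sq_nonneg (g1 * s2 - g2 * s1)]
    · positivity
  have : 0 ≤ t * (1 - t) := mul_nonneg ht0 (by linarith)
  nlinarith [mul_nonneg this (sub_nonneg.2 key)]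

theorem real_factor (a b c : ℝ) : ∃ u1 u2 u3 v1 v2 v3 : ℝ,
    u1 * v2 - u2 * v1 = a ∧ u1 * v3 - u3 * v1 = b ∧ u2 * v3 - u3 * v2 = c := by
  by_cases ha : a = 0
  · exact ⟨b, c, 0, 0, 0, 1, by simp [ha], by simp, by simp⟩
  · refine ⟨1, 0, -(c / a), 0, a, b, by simp, by simp, by field_simp; ring⟩

/-- Squared norm of the imaginary part in terms of the Gram matrix. -/
def gpoly (a b c n1 n2 n3 d12 d13 d23 : ℝ) : ℝ :=
  a ^ 2 * (n1 * n2 - d12 ^ 2) + b ^ 2 * (n1 * n3 - d13 ^ 2) + c ^ 2 * (n2 * n3 - d23 ^ 2)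
  + 2 * a * b * (n1 * d23 - d12 * d13) + 2 * b * c * (n3 * d12 - d13 * d23)
  - 2 * a * c * (n2 * d13 - d12 * d23)

theorem normSq_im_val (a b c : ℝ) (x y z : Quaternion ℝ) :
    normSq (val a (b : Quaternion ℝ) c x y z).im = gpoly a b c (normSq x) (normSq y) (normSq z)
      (star x * y).re (star x * z).re (star y * z).re := by
  simp [val, gpoly, normSq_def']; ring

theorem re_val (a b c : ℝ) (x y z : Quaternion ℝ) :
    (val a (b : Quaternion ℝ) c x y z).re =
      a * (star x * y).re + b * (star x * z).re + c * (star y * z).re := by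
  simp [val]; ring

theorem gpoly_concave (a b c : ℝ) (x y z x' y' z' : Quaternion ℝ) {t g1 g2 : ℝ} (ht0 : 0 ≤ t)
    (ht1 : t ≤ 1)
    (h1 : g1 ^ 2 = normSq (val a (b : Quaternion ℝ) c x y z).im)
    (h2 : g2 ^ 2 = normSq (val a (b : Quaternion ℝ) c x' y' z').im) :
    ((1 - t) * g1 + t * g2) ^ 2 ≤ gpoly a b c
      ((1 - t) * normSq x + t * normSq x') ((1 - t) * normSq y + t * normSq y')
      ((1 - t) * normSq z + t * normSq z')
      ((1 - t) * (star x * y).re + t * (star x' * y').re)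
      ((1 - t) * (star x * z).re + t * (star x' * z').re)
      ((1 - t) * (star y * z).re + t * (star y' * z').re) := by
  rw [normSq_im_val] at h1 h2
  obtain ⟨u1, u2, u3, v1, v2, v3, rfl, rfl, rfl⟩ := real_factor a b c
  have hN : ∀ (u1 u2 u3 : ℝ) (x y z : Quaternion ℝ), normSq (u1 • x + u2 • y + u3 • z) =
      u1 ^ 2 * normSq x + u2 ^ 2 * normSq y + u3 ^ 2 * normSq z + 2 * u1 * u2 * (star x * y).re
      + 2 * u1 * u3 * (star x * z).re + 2 * u2 * u3 * (star y * z).re := by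
    intro u1 u2 u3 x y z
    simp [normSq_def']; ring
  have hn : ∀ (u1 u2 u3 : ℝ) (x y z : Quaternion ℝ), 0 ≤
      u1 ^ 2 * normSq x + u2 ^ 2 * normSq y + u3 ^ 2 * normSq z + 2 * u1 * u2 * (star x * y).re
      + 2 * u1 * u3 * (star x * z).re + 2 * u2 * u3 * (star y * z).re := by
    intro u1 u2 u3 x y z
    rw [← hN]; exact normSq_nonneg
  have key := mixed_disc (hn u1 u2 u3 x y z) (hn v1 v2 v3 x y z) (hn u1 u2 u3 x' y' z')
    (hn v1 v2 v3 x' y' z') (g1 := g1) (g2 := g2) (t := t)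
    (s1 := u1 * v1 * normSq x + u2 * v2 * normSq y + u3 * v3 * normSq z
      + (u1 * v2 + u2 * v1) * (star x * y).re + (u1 * v3 + u3 * v1) * (star x * z).re
      + (u2 * v3 + u3 * v2) * (star y * z).re)
    (s2 := u1 * v1 * normSq x' + u2 * v2 * normSq y' + u3 * v3 * normSq z'
      + (u1 * v2 + u2 * v1) * (star x' * y').re + (u1 * v3 + u3 * v1) * (star x' * z').re
      + (u2 * v3 + u3 * v2) * (star y' * z').re)
    (by rw [h1, gpoly]; ring) (by rw [h2, gpoly]; ring) ht0 ht1
  refine key.trans (le_of_eq ?_)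
  rw [gpoly]; ring

/-- Real quadratic form. -/
def qf (a b c r p q s : ℝ) : ℝ := a * (p * q) + b * (p * s) + c * (q * s) - r * (p^2 + q^2 + s^2)

theorem exists_isotropic {a b c r : ℝ} (f g h : Fin 4 → ℝ)
    (hs : ∑ k, qf a b c r (f k) (g k) (h k) = 0)
    (hn : ∑ k, (f k ^ 2 + g k ^ 2 + h k ^ 2) = 1) :
    ∃ p q s : ℝ, qf a b c r p q s = 0 ∧ p ^ 2 + q ^ 2 + s ^ 2 ≠ 0 := by
  by_cases hall : ∃ k ∈ Finset.univ, qf a b c r (f k) (g k) (h k) ≠ 0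
  · obtain ⟨i, -, hi⟩ := Finset.exists_pos_of_sum_zero_of_exists_nonzero _ hs hall
    obtain ⟨j, -, hj⟩ := Finset.exists_pos_of_sum_zero_of_exists_nonzero
      (s := Finset.univ) (fun k => - qf a b c r (f k) (g k) (h k)) (by simp [hs]) (by simpa using hall)
    have hj' : qf a b c r (f j) (g j) (h j) < 0 := by linarith
    let φ : ℝ → ℝ := fun t => qf a b c r ((1 - t) * f j + t * f i) ((1 - t) * g j + t * g i)
      ((1 - t) * h j + t * h i)
    have hφ : Continuous φ := by simp only [φ, qf]; fun_prop
    have hz : (0 : ℝ) ∈ Set.Icc (φ 0) (φ 1) := by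
      constructor
      · simpa [φ] using hj'.le
      · simpa [φ] using hi.le
    obtain ⟨t, -, ht⟩ := intermediate_value_Icc zero_le_one hφ.continuousOn hz
    refine ⟨_, _, _, ht, fun h0 => ?_⟩
    have a1 : (1 - t) * f j = - (t * f i) := by nlinarith [sq_nonneg ((1 - t) * f j + t * f i), sq_nonneg ((1 - t) * g j + t * g i), sq_nonneg ((1 - t) * h j + t * h i)]
    have a2 : (1 - t) * g j = - (t * g i) := by nlinarith [sq_nonneg ((1 - t) * f j + t * f i), sq_nonneg ((1 - t) * g j + t * g i), sq_nonneg ((1 - t) * h j + t * h i)]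
    have a3 : (1 - t) * h j = - (t * h i) := by nlinarith [sq_nonneg ((1 - t) * f j + t * f i), sq_nonneg ((1 - t) * g j + t * g i), sq_nonneg ((1 - t) * h j + t * h i)]
    have sc : ∀ l p q s : ℝ, qf a b c r (l * p) (l * q) (l * s) = l ^ 2 * qf a b c r p q s := by
      intro l p q s; simp only [qf]; ring
    have e := sc (1 - t) (f j) (g j) (h j)
    rw [a1, a2, a3, ← neg_mul, ← neg_mul, ← neg_mul, sc] at e
    by_cases t0 : t = 0
    · subst t0; norm_num at e; linarith
    · have : 0 < (-t) ^ 2 := by rw [neg_sq]; positivity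
      nlinarith [mul_pos this hi, sq_nonneg (1 - t)]
  · push Not at hall
    by_contra! hno
    have : ∑ k, (f k ^ 2 + g k ^ 2 + h k ^ 2) = 0 :=
      Finset.sum_eq_zero fun k hk => hno _ _ _ (hall k hk)
    linarith

theorem exists_real_vec {a b c r : ℝ} {x y z : Quaternion ℝ}
    (hn : normSq x + normSq y + normSq z = 1)
    (hr : (val a (b : Quaternion ℝ) c x y z).re = r) :
    ∃ p q s : ℝ, p ^ 2 + q ^ 2 + s ^ 2 = 1 ∧ a * (p * q) + b * (p * s) + c * (q * s) = r := by
  obtain ⟨p, q, s, h, h0⟩ := exists_isotropic (a := a) (b := b) (c := c) (r := r)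
    ![x.re, x.imI, x.imJ, x.imK] ![y.re, y.imI, y.imJ, y.imK] ![z.re, z.imI, z.imJ, z.imK]
    (by
      simp only [Fin.sum_univ_four, qf]
      dsimp only [Matrix.cons_val]
      simp [normSq_def'] at hn
      simp [val] at hr
      linear_combination hr - r * hn)
    (by
      simp [Fin.sum_univ_four]
      simp [normSq_def'] at hn
      linarith)
  set N := p ^ 2 + q ^ 2 + s ^ 2 with hN
  have hp : 0 < N := lt_of_le_of_ne (by positivity) (Ne.symm h0)
  have ht : (√N)⁻¹ ^ 2 = N⁻¹ := by rw [inv_pow, Real.sq_sqrt hp.le]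
  refine ⟨(√N)⁻¹ * p, (√N)⁻¹ * q, (√N)⁻¹ * s, ?_, ?_⟩
  · rw [mul_pow, mul_pow, mul_pow, ht, ← mul_add, ← mul_add, ← hN, inv_mul_cancel₀ h0]
  · rw [qf, ← hN] at h
    have : a * ((√N)⁻¹ * p * ((√N)⁻¹ * q)) + b * ((√N)⁻¹ * p * ((√N)⁻¹ * s))
      + c * ((√N)⁻¹ * q * ((√N)⁻¹ * s)) = (√N)⁻¹ ^ 2 * (a * (p * q) + b * (p * s) + c * (q * s)) := by
      ring
    rw [this, ht, sub_eq_zero.1 h, mul_comm r, ← mul_assoc, inv_mul_cancel₀ h0, one_mul]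

theorem fill {a b c : ℝ} {x y z : Quaternion ℝ} {m : ℝ}
    (hn : normSq x + normSq y + normSq z = 1) (hm0 : 0 ≤ m)
    (hm : m ≤ normSq (val a (b : Quaternion ℝ) c x y z).im) :
    ∃ X Y Z : Quaternion ℝ, normSq X + normSq Y + normSq Z = 1 ∧
      (val a (b : Quaternion ℝ) c X Y Z).re = (val a (b : Quaternion ℝ) c x y z).re ∧
      normSq (val a (b : Quaternion ℝ) c X Y Z).im = m := by
  obtain ⟨p, q, s, h1, h2⟩ := exists_real_vec hn rfl
  let φ : ℝ → ℝ := fun t => gpoly a b c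
      ((1 - t) * normSq x + t * p ^ 2) ((1 - t) * normSq y + t * q ^ 2)
      ((1 - t) * normSq z + t * s ^ 2)
      ((1 - t) * (star x * y).re + t * (p * q))
      ((1 - t) * (star x * z).re + t * (p * s))
      ((1 - t) * (star y * z).re + t * (q * s))
  have hφ : Continuous φ := by simp only [φ, gpoly]; fun_prop
  have hmem : m ∈ Set.Icc (φ 1) (φ 0) := by
    constructor
    · have : φ 1 = 0 := by simp only [φ, gpoly]; ring
      rw [this]; exact hm0
    · have : φ 0 = normSq (val a (b : Quaternion ℝ) c x y z).im := by
        rw [normSq_im_val]; simp [φ]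
      rw [this]; exact hm
  obtain ⟨t, ⟨ht0, ht1⟩, ht⟩ := intermediate_value_Icc' zero_le_one hφ.continuousOn hmem
  obtain ⟨X, Y, Z, e1, e2, e3, e4, e5, e6⟩ := gram_comb x y z (p : Quaternion ℝ)
    (q : Quaternion ℝ) (s : Quaternion ℝ) ht0 ht1
  simp only [normSq_coe, star_coe, ← coe_mul, re_coe] at e1 e2 e3 e4 e5 e6
  refine ⟨X, Y, Z, ?_, ?_, ?_⟩
  · rw [e1, e2, e3]
    linear_combination (1 - t) * hn + t * h1
  · rw [re_val a b c X, e4, e5, e6]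
    rw [re_val a b c x] at h2 ⊢
    linear_combination t * h2
  · rw [normSq_im_val, e1, e2, e3, e4, e5, e6]
    exact ht

theorem W3_convex (a b c : ℝ) :
    Convex ℝ (W3 (a : Quaternion ℝ) (b : Quaternion ℝ) (c : Quaternion ℝ)) := by
  intro q hq q' hq' s t hs ht hst
  obtain rfl : s = 1 - t := by linarith
  have ht1 : t ≤ 1 := by linarith
  obtain ⟨x, y, z, hn, rfl⟩ := hq
  obtain ⟨x', y', z', hn', rfl⟩ := hq'
  change (1 - t) • val a b c x y z + t • val a b c x' y' z' ∈ _
  obtain ⟨X, Y, Z, e1, e2, e3, e4, e5, e6⟩ := gram_comb x y z x' y' z' ht ht1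
  have hN : normSq X + normSq Y + normSq Z = 1 := by
    rw [e1, e2, e3]; linear_combination (1 - t) * hn + t * hn'
  have hRe : (val a (b : Quaternion ℝ) c X Y Z).re =
      ((1 - t) • val a (b : Quaternion ℝ) c x y z + t • val a (b : Quaternion ℝ) c x' y' z').re := by
    rw [re_add, re_smul, re_smul, re_val, re_val, re_val, e4, e5, e6, smul_eq_mul, smul_eq_mul]
    ring
  have hIm : normSq ((1 - t) • val a (b : Quaternion ℝ) c x y z
      + t • val a (b : Quaternion ℝ) c x' y' z').im ≤
      normSq (val a (b : Quaternion ℝ) c X Y Z).im := by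
    rw [normSq_im_val a b c X, e1, e2, e3, e4, e5, e6]
    refine le_trans ?_ (gpoly_concave a b c x y z x' y' z' ht ht1
      (g1 := ‖(val a (b : Quaternion ℝ) c x y z).im‖)
      (g2 := ‖(val a (b : Quaternion ℝ) c x' y' z').im‖)
      (by rw [normSq_eq_norm_mul_self, sq]) (by rw [normSq_eq_norm_mul_self, sq]))
    rw [normSq_eq_norm_mul_self, ← sq]
    apply pow_le_pow_left₀ (norm_nonneg _)
    rw [im_add, im_smul, im_smul]
    refine (norm_add_le _ _).trans ?_
    rw [norm_smul, norm_smul, Real.norm_of_nonneg hs, Real.norm_of_nonneg ht]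
  obtain ⟨X', Y', Z', f1, f2, f3⟩ := fill hN normSq_nonneg hIm
  have hmem : val a (b : Quaternion ℝ) c X' Y' Z' ∈
      W3 (a : Quaternion ℝ) (b : Quaternion ℝ) (c : Quaternion ℝ) := by
    refine ⟨X', Y', Z', f1, ?_⟩
    rw [val]
  exact W3_rot hmem (f2.trans hRe) f3

theorem eq_coe_of_im {q : Quaternion ℝ} (h : q.im = 0) : q = (q.re : Quaternion ℝ) := by
  conv_lhs => rw [← re_add_im q, h, add_zero]

theorem normal_form {a c : Quaternion ℝ} (b : Quaternion ℝ) (ha : a ≠ 0) (hc : c ≠ 0) :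
    ∃ (r s : ℝ) (b' : Quaternion ℝ), r ≠ 0 ∧ s ≠ 0 ∧
      W3 (r : Quaternion ℝ) b' (s : Quaternion ℝ) = W3 a b c ∧
      (b'.im = 0 ↔ (star b * a * c).im = 0) := by
  obtain ⟨u, hu, r, hr, hr2⟩ := phase a
  obtain ⟨w, hw, s, hs, hs2⟩ := phase' c
  have hr0 : r ≠ 0 := by
    rintro rfl
    rw [mul_zero, eq_comm, normSq_eq_zero] at hr2
    exact ha hr2
  have hs0 : s ≠ 0 := by
    rintro rfl
    rw [mul_zero, eq_comm, normSq_eq_zero] at hs2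
    exact hc hs2
  refine ⟨r, s, star u * b * w, hr0, hs0, ?_, ?_⟩
  · rw [← W3_diag (a := a) (b := b) (c := c) hu (normSq.map_one) hw]
    simp [hr, hs]
  · have ea : a = r • u := by
      rw [← one_mul a, ← self_mul_star_of_unit hu, mul_assoc, hr, mul_coe_eq_smul]
    have ec : c = s • star w := by
      rw [← mul_one c, ← self_mul_star_of_unit hw, ← mul_assoc, hs, coe_mul_eq_smul]
    have e : star b * a * c = (r * s) • (w * star (star u * b * w) * star w) := by
      rw [ea, ec]
      simp only [star_mul, star_star, mul_smul_comm, smul_mul_assoc, smul_smul, mul_assoc]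
      rw [← mul_assoc w, self_mul_star_of_unit hw, one_mul, mul_comm s r]
    generalize star u * b * w = d at e ⊢
    rw [e, im_smul, smul_eq_zero_iff_right (mul_ne_zero hr0 hs0)]
    constructor
    · intro h
      rw [eq_coe_of_im h, star_coe, ← coe_commutes, mul_assoc, self_mul_star_of_unit hw, mul_one, im_coe]
    · intro h
      have h1 := eq_coe_of_im h
      have h2 : star d = star w * (w * star d * star w) * w := by
        rw [mul_assoc, mul_assoc, mul_assoc, star_mul_self_of_unit hw, mul_one, ← mul_assoc,
          star_mul_self_of_unit hw, one_mul]
      rw [h1, ← coe_commutes, mul_assoc, star_mul_self_of_unit hw, mul_one] at h2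
      have h3 : (star d).im = 0 := by rw [h2, im_coe]
      simpa using h3

/-- For a strictly upper triangular `A ∈ M₃(ℍ)`, the numerical range `W(A)` is
convex iff `a₁₃* a₁₂ a₂₃` is real. -/
theorem qnr_3x3_convex_iff (A : Matrix (Fin 3) (Fin 3) (Quaternion ℝ))
    (hupper : ∀ i j, j ≤ i → A i j = 0) :
    Convex ℝ (qnr A) ↔ (star (A 0 2) * A 0 1 * A 1 2).im = 0 := by
  rw [qnr_eq_W3 A hupper]
  generalize A 0 1 = a
  generalize A 0 2 = b
  generalize A 1 2 = c
  by_cases ha : a = 0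
  · subst ha
    refine iff_of_true ?_ (by simp)
    obtain ⟨u, hu, r, hr, -⟩ := phase b
    obtain ⟨v, hv, s, hs, -⟩ := phase c
    rw [← W3_diag (a := 0) (b := b) (c := c) hu hv (normSq.map_one)]
    have := W3_convex 0 r s
    simpa [hr, hs] using this
  by_cases hc : c = 0
  · subst hc
    refine iff_of_true ?_ (by simp)
    obtain ⟨v, hv, r, hr, -⟩ := phase' a
    obtain ⟨w, hw, s, hs, -⟩ := phase' b
    rw [← W3_diag (a := a) (b := b) (c := 0) (normSq.map_one) hv hw]
    have := W3_convex r s 0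
    simpa [hr, hs] using this
  obtain ⟨r, s, d, hr, hs, hW, hd⟩ := normal_form b ha hc
  rw [← hW, ← hd]
  constructor
  · intro h
    by_contra h0
    exact W3_not_convex hr hs h0 h
  · intro h
    rw [eq_coe_of_im h]
    exact W3_convex _ _ _
end

section
/- Let A ∈ M₃(ℍ) be strictly upper triangular with entries a₁₂, a₁₃, a₂₃ above the diagonal, and suppose a₁₃* a₁₂ a₂₃ is a nonzero real number. Then A is unitarily equivalent to a real matrix: there exists a unitary matrix U ∈ M₃(ℍ) (U*U = I) such that every entry of U*AU lies in ℝ ⊆ ℍ. Moreover U can be taken diagonal, U = diag(ρ, z₁₂*ρ, z₁₃*ρ), where ρ is any unit quaternion and z_{ij} are unit quaternions with a_{ij} = |a_{ij}| z_{ij}. -/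
open Matrix

theorem aux_star_mul {q : Quaternion ℝ} (h : ‖q‖ = 1) : star q * q = 1 := by
  rw [Quaternion.star_mul_self, Quaternion.normSq_eq_norm_mul_self, h]; simp

theorem aux_mul_star {q : Quaternion ℝ} (h : ‖q‖ = 1) : q * star q = 1 := by
  rw [Quaternion.self_mul_star, Quaternion.normSq_eq_norm_mul_self, h]; simp

theorem aux_conj {q : Quaternion ℝ} (h : ‖q‖ = 1) (c : ℝ) :
    star q * (c : Quaternion ℝ) * q = c := by
  rw [← Quaternion.coe_commutes, mul_assoc, aux_star_mul h, mul_one]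

theorem aux_polar (a : Quaternion ℝ) (h : a ≠ 0) :
    ∃ z : Quaternion ℝ, ‖z‖ = 1 ∧ a = ((‖a‖ : ℝ) : Quaternion ℝ) * z := by
  have h' : ‖a‖ ≠ 0 := norm_ne_zero_iff.mpr h
  refine ⟨((‖a‖⁻¹ : ℝ) : Quaternion ℝ) * a, ?_, ?_⟩
  · rw [norm_mul, Quaternion.norm_coe, norm_inv, norm_norm, inv_mul_cancel₀ h']
  · rw [← mul_assoc, ← Quaternion.coe_mul, mul_inv_cancel₀ h', Quaternion.coe_one, one_mul]

/-- If `A ∈ M₃(ℍ)` is strictly upper triangular and `a₁₃* a₁₂ a₂₃` is a nonzero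
real number, then `A` is unitarily equivalent to a real matrix; moreover the unitary can be
taken to be the diagonal matrix `diag(ρ, z₁₂*ρ, z₁₃*ρ)` for any unit quaternion `ρ`, where
`z₁₂, z₁₃` are unit quaternions with `a₁₂ = |a₁₂| z₁₂` and `a₁₃ = |a₁₃| z₁₃`. -/
theorem unitarily_equivalent_to_real (A : Matrix (Fin 3) (Fin 3) (Quaternion ℝ))
    (hupper : ∀ i j, j ≤ i → A i j = 0)
    (hre : (star (A 0 2) * A 0 1 * A 1 2).im = 0)
    (hne : star (A 0 2) * A 0 1 * A 1 2 ≠ 0) :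
    (∃ U : Matrix (Fin 3) (Fin 3) (Quaternion ℝ),
      Uᴴ * U = 1 ∧ ∀ i j, ((Uᴴ * A * U) i j).im = 0) ∧
    (∀ ρ z12 z13 : Quaternion ℝ, ‖ρ‖ = 1 → ‖z12‖ = 1 → ‖z13‖ = 1 →
      A 0 1 = ((‖A 0 1‖ : ℝ) : Quaternion ℝ) * z12 →
      A 0 2 = ((‖A 0 2‖ : ℝ) : Quaternion ℝ) * z13 →
      (Matrix.diagonal ![ρ, star z12 * ρ, star z13 * ρ])ᴴ *
          (Matrix.diagonal ![ρ, star z12 * ρ, star z13 * ρ]) = 1 ∧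
      ∀ i j, (((Matrix.diagonal ![ρ, star z12 * ρ, star z13 * ρ])ᴴ * A *
          (Matrix.diagonal ![ρ, star z12 * ρ, star z13 * ρ])) i j).im = 0) := by
  have h02 : A 0 2 ≠ 0 := by rintro h; simp [h] at hne
  have h01 : A 0 1 ≠ 0 := by rintro h; simp [h] at hne
  refine (fun H => ⟨?_, H⟩) ?_
  rotate_left
  · obtain ⟨z12, n12, e12⟩ := aux_polar _ h01
    obtain ⟨z13, n13, e13⟩ := aux_polar _ h02
    exact ⟨_, H 1 z12 z13 norm_one n12 n13 e12 e13⟩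
  intro ρ z12 z13 hρ h12 h13 e12 e13
  set a : ℝ := ‖A 0 1‖ with ha
  set b : ℝ := ‖A 0 2‖ with hb
  have ha0 : a ≠ 0 := norm_ne_zero_iff.mpr h01
  have hb0 : b ≠ 0 := norm_ne_zero_iff.mpr h02
  have key : ∃ s : ℝ, z12 * A 1 2 = (s : Quaternion ℝ) * z13 := by
    have hr := Quaternion.re_add_im (star (A 0 2) * A 0 1 * A 1 2)
    rw [hre, add_zero] at hr
    generalize (star (A 0 2) * A 0 1 * A 1 2).re = r at hr
    refine ⟨(a * b)⁻¹ * r, ?_⟩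
    have h1 : star (A 0 2) * A 0 1 * A 1 2
        = ((a * b : ℝ) : Quaternion ℝ) * (star z13 * (z12 * A 1 2)) := by
      rw [e12, e13]
      simp only [Quaternion.coe_mul_eq_smul, Quaternion.star_smul, smul_mul_assoc,
        mul_smul_comm, smul_smul, mul_assoc]
    rw [h1] at hr
    have h2 : star z13 * (z12 * A 1 2) = (((a * b)⁻¹ * r : ℝ) : Quaternion ℝ) := by
      rw [Quaternion.coe_mul, hr, ← mul_assoc ((((a * b)⁻¹ : ℝ)) : Quaternion ℝ), ← Quaternion.coe_mul,
        inv_mul_cancel₀ (mul_ne_zero ha0 hb0), Quaternion.coe_one, one_mul]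
    rw [← h2, h2, Quaternion.coe_commutes, ← h2, ← mul_assoc, aux_mul_star h13, one_mul]
  obtain ⟨s, hs⟩ := key
  have n1 : ‖star z12 * ρ‖ = 1 := by rw [norm_mul, norm_star, h12, hρ, one_mul]
  have n2 : ‖star z13 * ρ‖ = 1 := by rw [norm_mul, norm_star, h13, hρ, one_mul]
  constructor
  · rw [Matrix.diagonal_conjTranspose, Matrix.diagonal_mul_diagonal, ← Matrix.diagonal_one]
    congr 1
    funext i
    fin_cases i
    · exact aux_star_mul hρ
    · exact aux_star_mul n1
    · exact aux_star_mul n2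
  · intro i j
    rw [Matrix.diagonal_conjTranspose, Matrix.mul_diagonal, Matrix.diagonal_mul]
    by_cases hij : j ≤ i
    · rw [hupper i j hij, mul_zero, zero_mul]; exact Quaternion.im_coe 0
    have E1 : star ρ * A 0 1 * (star z12 * ρ) = (a : Quaternion ℝ) := by
      rw [e12]
      simp only [mul_assoc]
      rw [← mul_assoc z12, aux_mul_star h12, one_mul, ← mul_assoc (star ρ), aux_conj hρ]
    have E2 : star ρ * A 0 2 * (star z13 * ρ) = (b : Quaternion ℝ) := by
      rw [e13]
      simp only [mul_assoc]
      rw [← mul_assoc z13, aux_mul_star h13, one_mul, ← mul_assoc (star ρ), aux_conj hρ]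
    have E3 : star (star z12 * ρ) * A 1 2 * (star z13 * ρ) = (s : Quaternion ℝ) := by
      rw [star_mul, star_star, mul_assoc (star ρ), hs]
      simp only [mul_assoc]
      rw [← mul_assoc z13, aux_mul_star h13, one_mul, ← mul_assoc (star ρ), aux_conj hρ]
    fin_cases i <;> fin_cases j <;> first | exact absurd (by decide) hij | skip
    · exact (congrArg Quaternion.im E1).trans (Quaternion.im_coe a)
    · exact (congrArg Quaternion.im E2).trans (Quaternion.im_coe b)
    · exact (congrArg Quaternion.im E3).trans (Quaternion.im_coe s)
end

section
/- Let n ≥ 1 and let c : {1,…,n}² → ℝ satisfy c_{ij} ≥ 0 for all i,j and c_{ii} = 0 for all i. Then ⋃_{β ∈ S⁺_{ℝⁿ}} {∑_{i,j=1}^n s_{ij} : s_{ij} ∈ ℍ, |s_{ij}| = βᵢβⱼ c_{ij} for all i,j} = 𝔻_ℍ(0, max_{β ∈ S⁺_{ℝⁿ}} ∑_{i,j=1}^n βᵢβⱼ c_{ij}). -/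
/-- For nonnegative weights `c` vanishing on the diagonal, the union over
`β ∈ S⁺_{ℝⁿ}` of the Minkowski sums of spheres `𝕊_ℍ(0, βᵢβⱼcᵢⱼ)` is the closed disk
centered at the origin of radius `max_{β ∈ S⁺_{ℝⁿ}} ∑ᵢⱼ βᵢβⱼcᵢⱼ`. -/
theorem union_sphere_sums_eq_disk {n : ℕ} (hn : 1 ≤ n) (c : Fin n → Fin n → ℝ)
    (hc : ∀ i j, 0 ≤ c i j) (hcd : ∀ i, c i i = 0)
    (M : ℝ)
    (hM : IsGreatest {t | ∃ β : Fin n → ℝ, (∀ i, 0 ≤ β i) ∧ (∑ i, β i ^ 2) = 1 ∧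
        t = ∑ i, ∑ j, β i * β j * c i j} M) :
    {q : Quaternion ℝ | ∃ β : Fin n → ℝ, (∀ i, 0 ≤ β i) ∧ (∑ i, β i ^ 2) = 1 ∧
        ∃ s : Fin n → Fin n → Quaternion ℝ,
          (∀ i j, ‖s i j‖ = β i * β j * c i j) ∧ q = ∑ i, ∑ j, s i j}
      = Metric.closedBall (0 : Quaternion ℝ) M := by
  obtain ⟨⟨b, hb0, hb1, hbM⟩, hub⟩ := hM
  ext q
  simp only [Set.mem_setOf_eq, mem_closedBall_zero_iff]
  constructor
  · rintro ⟨β, h0, h1, s, hs, rfl⟩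
    refine le_trans ?_ (hub ⟨β, h0, h1, rfl⟩)
    refine (norm_sum_le _ _).trans (Finset.sum_le_sum fun i _ => ?_)
    refine (norm_sum_le _ _).trans (Finset.sum_le_sum fun j _ => ?_)
    exact (hs i j).le
  · intro hq
    let k : Fin n := ⟨0, hn⟩
    let w : ℝ → Fin n → ℝ := fun t i => (1 - t) * (if i = k then 1 else 0) + t * b i ^ 2
    let f : ℝ → ℝ := fun t => ∑ i, ∑ j, √(w t i) * √(w t j) * c i j
    have hf : Continuous f := by
      simp only [f, w]
      fun_prop
    have hf0 : f 0 = 0 := by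
      refine Finset.sum_eq_zero fun i _ => Finset.sum_eq_zero fun j _ => ?_
      by_cases hi : i = k
      · by_cases hj : j = k
        · rw [hi, hj, hcd, mul_zero]
        · simp [w, hj]
      · simp [w, hi]
    have hf1 : f 1 = M := by
      simp [f, w, hbM, Real.sqrt_sq, hb0]
    obtain ⟨t, ⟨ht0, ht1⟩, ht⟩ := intermediate_value_Icc zero_le_one hf.continuousOn
      (show ‖q‖ ∈ Set.Icc (f 0) (f 1) by rw [hf0, hf1]; exact ⟨norm_nonneg q, hq⟩)
    have hw : ∀ i, 0 ≤ w t i := by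
      intro i
      have h1 : 0 ≤ 1 - t := by linarith
      have h2 : (0 : ℝ) ≤ if i = k then 1 else 0 := by split_ifs <;> norm_num
      simp only [w]
      positivity
    obtain ⟨u, hu, hqu⟩ : ∃ u : Quaternion ℝ, ‖u‖ = 1 ∧ q = ‖q‖ • u := by
      by_cases h : q = 0
      · exact ⟨1, norm_one, by simp [h]⟩
      · have h' : ‖q‖ ≠ 0 := norm_ne_zero_iff.mpr h
        refine ⟨‖q‖⁻¹ • q, ?_, ?_⟩
        · rw [norm_smul, norm_inv, norm_norm, inv_mul_cancel₀ h']
        · rw [smul_smul, mul_inv_cancel₀ h', one_smul]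
    refine ⟨fun i => √(w t i), fun i => Real.sqrt_nonneg _, ?_,
      fun i j => (√(w t i) * √(w t j) * c i j) • u, ?_, ?_⟩
    · simp only [Real.sq_sqrt (hw _)]
      simp only [w, Finset.sum_add_distrib, ← Finset.mul_sum, hb1]
      simp
    · intro i j
      rw [norm_smul, hu, mul_one, Real.norm_of_nonneg]
      exact mul_nonneg (mul_nonneg (Real.sqrt_nonneg _) (Real.sqrt_nonneg _)) (hc i j)
    · rw [hqu, ← ht]
      simp only [f, Finset.sum_smul]
end

section
/- Let q₁₂, q₁₃ ∈ ℍ be nonzero, let k = |q₁₂|² + |q₁₃|², and let à ∈ M₃(ℍ) be the matrix with rows (0, q₁₂, q₁₃), (0, 1, 0), (0, 0, 1). Then W(Ã) = ⋃_{d ∈ [0,1]} 𝔻_ℍ(d, √(k d(1−d))). -/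
lemma qnr_aux_normsq (w : Quaternion ℝ) (a c : ℝ) :
    ‖a • w + (c : Quaternion ℝ)‖ ^ 2 = a ^ 2 * ‖w‖ ^ 2 + 2 * a * c * w.re + c ^ 2 := by
  have h : ∀ z : Quaternion ℝ, ‖z‖ ^ 2 = z.re ^ 2 + z.imI ^ 2 + z.imJ ^ 2 + z.imK ^ 2 := by
    intro z
    rw [← Quaternion.normSq_def', Quaternion.normSq_eq_norm_mul_self, sq]
  rw [h, h]
  simp
  ring

lemma qnr_aux_star_mul (z : Quaternion ℝ) : star z * z = ((‖z‖ ^ 2 : ℝ) : Quaternion ℝ) := by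
  rw [Quaternion.star_mul_self, Quaternion.normSq_eq_norm_mul_self, sq]

lemma qnr_aux_mul_star (z : Quaternion ℝ) : z * star z = ((‖z‖ ^ 2 : ℝ) : Quaternion ℝ) := by
  rw [Quaternion.self_mul_star, Quaternion.normSq_eq_norm_mul_self, sq]

lemma qnr_aux_solve (q r w : Quaternion ℝ) (hq : q ≠ 0) (hr : r ≠ 0) (d : ℝ)
    (hw : ‖w‖ ^ 2 ≤ (‖q‖ ^ 2 + ‖r‖ ^ 2) * d) :
    ∃ x y : Quaternion ℝ, q * x + r * y = w ∧ ‖x‖ ^ 2 + ‖y‖ ^ 2 = d := by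
  have ha : 0 < ‖q‖ ^ 2 := by positivity
  have hb : 0 < ‖r‖ ^ 2 := by positivity
  have hqq := qnr_aux_mul_star q
  have hrr := qnr_aux_mul_star r
  have hnx : ∀ z, ‖star q * z‖ ^ 2 = ‖q‖ ^ 2 * ‖z‖ ^ 2 := by
    intro z; rw [norm_mul, norm_star, mul_pow]
  have hny : ∀ z, ‖star r * z‖ ^ 2 = ‖r‖ ^ 2 * ‖z‖ ^ 2 := by
    intro z; rw [norm_mul, norm_star, mul_pow]
  generalize ‖q‖ ^ 2 = a at *
  generalize ‖r‖ ^ 2 = b at *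
  have hk : 0 < a + b := by positivity
  obtain ⟨s, hs⟩ : ∃ s : ℝ, s ^ 2 = (d - ‖w‖ ^ 2 / (a + b)) * (a * b / (a + b)) := by
    refine ⟨_, Real.sq_sqrt ?_⟩
    have : ‖w‖ ^ 2 / (a + b) ≤ d := by rw [div_le_iff₀ hk]; linarith
    have : 0 ≤ d - ‖w‖ ^ 2 / (a + b) := by linarith
    positivity
  refine ⟨star q * ((a + b)⁻¹ • w + ((s / a : ℝ) : Quaternion ℝ)),
    star r * ((a + b)⁻¹ • w + ((-s / b : ℝ) : Quaternion ℝ)), ?_, ?_⟩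
  · rw [← mul_assoc, ← mul_assoc, hqq, hrr]
    have huv : a * (s / a) + b * (-s / b) = 0 := by field_simp; ring
    have hkk : (a + b) * (a + b)⁻¹ = 1 := mul_inv_cancel₀ hk.ne'
    generalize s / a = u at *
    generalize -s / b = v at *
    generalize (a + b)⁻¹ = c at *
    ext
    · simp
      linear_combination w.re * hkk + huv
    · simp
      linear_combination w.imI * hkk
    · simp
      linear_combination w.imJ * hkk
    · simp
      linear_combination w.imK * hkk
  · rw [hnx, hny, qnr_aux_normsq, qnr_aux_normsq]
    have e : a * ((a + b)⁻¹ ^ 2 * ‖w‖ ^ 2 + 2 * (a + b)⁻¹ * (s / a) * w.re + (s / a) ^ 2)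
      + b * ((a + b)⁻¹ ^ 2 * ‖w‖ ^ 2 + 2 * (a + b)⁻¹ * (-s / b) * w.re + (-s / b) ^ 2)
      = ‖w‖ ^ 2 / (a + b) + s ^ 2 * ((a + b) / (a * b)) := by
      field_simp
      ring
    rw [e, hs]
    field_simp
    ring

/-- For nonzero `q₁₂, q₁₃ ∈ ℍ` and `k = |q₁₂|² + |q₁₃|²`, the matrix `Ã` with
rows `(0, q₁₂, q₁₃)`, `(0, 1, 0)`, `(0, 0, 1)` satisfies
`W(Ã) = ⋃_{d ∈ [0,1]} 𝔻_ℍ(d, √(k d(1−d)))`. -/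
theorem qnr_example_union_disks (q12 q13 : Quaternion ℝ) (h12 : q12 ≠ 0) (h13 : q13 ≠ 0) :
    qnr !![0, q12, q13; 0, 1, 0; 0, 0, 1] =
      ⋃ d ∈ Set.Icc (0 : ℝ) 1,
        Metric.closedBall ((d : ℝ) : Quaternion ℝ)
          (Real.sqrt ((‖q12‖ ^ 2 + ‖q13‖ ^ 2) * d * (1 - d))) := by
  have hsum : ∀ x : Fin 3 → Quaternion ℝ,
      (∑ i, ∑ j, star (x i) * (!![0, q12, q13; 0, 1, 0; 0, 0, 1] :
        Matrix (Fin 3) (Fin 3) (Quaternion ℝ)) i j * x j)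
      = star (x 0) * (q12 * x 1 + q13 * x 2)
        + ((‖x 1‖ ^ 2 + ‖x 2‖ ^ 2 : ℝ) : Quaternion ℝ) := by
    intro x
    rw [Quaternion.coe_add, ← qnr_aux_star_mul, ← qnr_aux_star_mul]
    simp [Fin.sum_univ_three, mul_add, mul_assoc, add_assoc]
  ext p
  simp only [qnr, Set.mem_ofPred_eq, hsum]
  simp only [Set.mem_iUnion, Metric.mem_closedBall,
    Fin.sum_univ_three, dist_eq_norm, exists_prop, Set.mem_Icc]
  constructor
  · rintro ⟨x, hx, rfl⟩
    refine ⟨‖x 1‖ ^ 2 + ‖x 2‖ ^ 2, ⟨by positivity, by nlinarith [sq_nonneg ‖x 0‖]⟩, ?_⟩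
    rw [add_sub_cancel_right]
    apply Real.le_sqrt_of_sq_le
    have h0 : 1 - (‖x 1‖ ^ 2 + ‖x 2‖ ^ 2) = ‖x 0‖ ^ 2 := by linarith
    rw [h0, norm_mul, norm_star, mul_pow, mul_comm]
    apply mul_le_mul_of_nonneg_right _ (sq_nonneg _)
    have h1 : ‖q12 * x 1 + q13 * x 2‖ ≤ ‖q12‖ * ‖x 1‖ + ‖q13‖ * ‖x 2‖ := by
      refine (norm_add_le _ _).trans ?_
      rw [norm_mul, norm_mul]
    have h2 := pow_le_pow_left₀ (norm_nonneg _) h1 2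
    nlinarith [sq_nonneg (‖q12‖ * ‖x 2‖ - ‖q13‖ * ‖x 1‖)]
  · rintro ⟨d, ⟨hd0, hd1⟩, hp⟩
    have hk : 0 ≤ ‖q12‖ ^ 2 + ‖q13‖ ^ 2 := by positivity
    have hd1' : 0 ≤ 1 - d := by linarith
    have hp2 : ‖p - (d : Quaternion ℝ)‖ ^ 2 ≤ (‖q12‖ ^ 2 + ‖q13‖ ^ 2) * d * (1 - d) := by
      rw [← Real.sq_sqrt (show 0 ≤ (‖q12‖ ^ 2 + ‖q13‖ ^ 2) * d * (1 - d) by positivity)]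
      exact pow_le_pow_left₀ (norm_nonneg _) hp 2
    obtain ⟨w, hw, hwn⟩ : ∃ w : Quaternion ℝ, (√(1 - d)) • w = p - (d : Quaternion ℝ) ∧
        ‖w‖ ^ 2 ≤ (‖q12‖ ^ 2 + ‖q13‖ ^ 2) * d := by
      rcases hd1'.eq_or_lt with h | h
      · refine ⟨0, ?_, by simp; positivity⟩
        rw [← h, mul_zero] at hp2
        have : ‖p - (d : Quaternion ℝ)‖ = 0 := by
          apply pow_eq_zero_iff (two_ne_zero) |>.1
          exact le_antisymm hp2 (sq_nonneg _)
        rw [norm_eq_zero.1 this, smul_zero]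
      · have hs : 0 < √(1 - d) := Real.sqrt_pos.2 h
        refine ⟨(√(1 - d))⁻¹ • (p - (d : Quaternion ℝ)), ?_, ?_⟩
        · rw [smul_smul, mul_inv_cancel₀ hs.ne', one_smul]
        · rw [norm_smul, mul_pow, norm_inv, inv_pow, Real.norm_eq_abs, sq_abs, Real.sq_sqrt hd1',
            inv_mul_le_iff₀ h]
          linarith
    obtain ⟨y, z, hyz, hn⟩ := qnr_aux_solve q12 q13 w h12 h13 d hwn
    refine ⟨![((√(1 - d) : ℝ) : Quaternion ℝ), y, z], ?_, ?_⟩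
    · simp [Quaternion.norm_coe, Real.sq_sqrt hd1']
      linarith
    · have e : p = (√(1 - d)) • w + (d : Quaternion ℝ) := by rw [hw]; abel
      simp only [Matrix.cons_val_zero, Matrix.cons_val_one, Matrix.cons_val, hyz, hn,
        Quaternion.star_coe, Quaternion.coe_mul_eq_smul]
      exact e
end
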